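/- Let L > 0, let ρ ∈ 𝒟_L, and let μ be the probability measure with density ρ. Then: (1) sup over all t, s ∈ [0,1] and n ≥ 1 of ∫ (ξₙ(x,t) − ξₙ(x,s))² dμ(x) is finite, with a bound depending on ρ only through L; (2) for every ε > 0 there exists N such that for all n ≥ N and all 0 ≤ t ≤ t+h ≤ 1, |∫ (ξₙ(x,t+h) − ξₙ(x,t))² dμ(x) − ∫ₜ^{t+h} σ̂ₛ²(f) ds| ≤ ε(n^{−1/2} + h); and (3) ∫ₜ^{t+h} σ̂ₛ²(f) ds = h·σ̂ₜ²(f) + o(h) as h → 0, uniformly in t. -/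

import Mathlib

open MeasureTheory Filter Topology Set UniformConvergence

noncomputable section

instance : Fact ((0:ℝ) < 1) := ⟨zero_lt_one⟩

/-- The circle `𝕊 = ℝ/ℤ`. -/
abbrev Circle1 : Type := AddCircle (1 : ℝ)

/-- A `C²` expanding circle map with expansion `≥ lam` and `‖T''‖_∞ ≤ Astar`,
encoded by a lift `F : ℝ → ℝ` satisfying `F (x+1) = F x + deg`. -/
structure CM (lam Astar : ℝ) where
  F : ℝ → ℝ
  deg : ℤ
  lift_add_one : ∀ x : ℝ, F (x + 1) = F x + deg
  contDiff : ContDiff ℝ 2 F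
  expanding : ∀ x : ℝ, lam ≤ deriv F x
  second_bound : ∀ x : ℝ, |deriv (deriv F) x| ≤ Astar

namespace CM

variable {lam Astar : ℝ}

/-- The induced map on the circle. -/
def toMap (T : CM lam Astar) : Circle1 → Circle1 :=
  fun x => (↑(T.F ((AddCircle.equivIco 1 0 x : ℝ))) : Circle1)

/-- The derivative of `T`, as a function on the circle. -/
def dmap (T : CM lam Astar) : Circle1 → ℝ :=
  fun x => deriv T.F ((AddCircle.equivIco 1 0 x : ℝ))

end CM

/-- The `C¹` distance on the space of maps. -/
def dC1 {lam Astar : ℝ} (T₁ T₂ : CM lam Astar) : ℝ :=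
  (⨆ x : Circle1, dist (T₁.toMap x) (T₂.toMap x)) + (⨆ x : Circle1, |T₁.dmap x - T₂.dmap x|)

/-- The transfer operator `ℒ_T h (x) = ∑_{T y = x} h y / T' y`. -/
def transfer {lam Astar : ℝ} (T : CM lam Astar) (h : Circle1 → ℝ) : Circle1 → ℝ :=
  fun x => ∑' y : {y : Circle1 // T.toMap y = x}, h y / T.dmap y

/-- Iterated transfer operators `ℒ_k ⋯ ℒ_1` of the sequence `T_1, T_2, …` (`Ts i = T_i`). -/
def transferIter {lam Astar : ℝ} (Ts : ℕ → CM lam Astar) : ℕ → (Circle1 → ℝ) → (Circle1 → ℝ)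
  | 0, h => h
  | (k+1), h => transfer (Ts (k+1)) (transferIter Ts k h)

/-- Composition `T_k ∘ ⋯ ∘ T_1` as circle maps. -/
def mapIter {lam Astar : ℝ} (Ts : ℕ → CM lam Astar) : ℕ → Circle1 → Circle1
  | 0 => id
  | (k+1) => (Ts (k+1)).toMap ∘ mapIter Ts k

/-- Composition of the lifts `F_k ∘ ⋯ ∘ F_1`. -/
def liftIter {lam Astar : ℝ} (Ts : ℕ → CM lam Astar) : ℕ → ℝ → ℝ
  | 0 => id
  | (k+1) => (Ts (k+1)).F ∘ liftIter Ts k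

/-- A real representative of `z`. -/
def zrep (z : Circle1) : ℝ := (AddCircle.equivIco 1 0 z : ℝ)

/-- The coordinate on the cut circle `J_z = 𝕊 ∖ {z}`. -/
def arcCoord (z x : Circle1) : ℝ := ((AddCircle.equivIoc 1 (zrep z) x : ℝ))

/-- `|x − y|_z`: the length of the subarc of `J_z` connecting `x` and `y`. -/
def arcDist (z x y : Circle1) : ℝ := |arcCoord z x - arcCoord z y|

/-- `g` is Lipschitz on `J_z = 𝕊 ∖ {z}` with constant `L`. -/
def LipOnArc (z : Circle1) (L : ℝ) (g : Circle1 → ℝ) : Prop :=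
  ∀ x y : Circle1, x ≠ z → y ≠ z → |g x - g y| ≤ L * arcDist z x y

/-- A probability density w.r.t. the Haar–Lebesgue measure `𝔪` on the circle. -/
def IsProbDensity (ψ : Circle1 → ℝ) : Prop :=
  Integrable ψ volume ∧ (∫ x : Circle1, ψ x) = 1 ∧ ∀ x, 0 ≤ ψ x

/-- The class `𝒟_L`: positive probability densities whose logarithm is Lipschitz
with constant `L` on `J_z` for some `z`. -/
def memD (L : ℝ) (ψ : Circle1 → ℝ) : Prop :=
  IsProbDensity ψ ∧ (∀ x, 0 < ψ x) ∧ ∃ z : Circle1, LipOnArc z L (fun x => Real.log (ψ x))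

/-- The `L¹(𝔪)` norm. -/
def l1norm (h : Circle1 → ℝ) : ℝ := ∫ x : Circle1, |h x|

/-- The supremum norm. -/
def supNorm (h : Circle1 → ℝ) : ℝ := ⨆ x : Circle1, |h x|

/-- The Lipschitz constant of `h` (w.r.t. the metric of the circle). -/
def lipConst (h : Circle1 → ℝ) : ℝ :=
  sInf {L : ℝ | 0 ≤ L ∧ ∀ x y : Circle1, |h x - h y| ≤ L * dist x y}

/-- The Lipschitz norm `‖h‖_Lip = Lip(h) + ‖h‖_∞`. -/
def lipNorm (h : Circle1 → ℝ) : ℝ := lipConst h + supNorm h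

/-- `ρ` is the density of the SRB measure of `T`: the density of a `T`-invariant
probability measure equivalent to `𝔪`. -/
def IsSRBDensity {lam Astar : ℝ} (T : CM lam Astar) (ρ : Circle1 → ℝ) : Prop :=
  IsProbDensity ρ ∧ (∀ᵐ x : Circle1, 0 < ρ x) ∧
    Measure.map T.toMap (volume.withDensity (fun x => ENNReal.ofReal (ρ x))) =
      volume.withDensity (fun x => ENNReal.ofReal (ρ x))

section QDS

variable {lam Astar : ℝ}

/-- `x_{n,k} = T_{n,k} ∘ ⋯ ∘ T_{n,1}` for a triangular array. -/
def arrIter (Tarr : ℕ → ℕ → CM lam Astar) (n : ℕ) : ℕ → Circle1 → Circle1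
  | 0 => id
  | (k+1) => (Tarr n (k+1)).toMap ∘ arrIter Tarr n k

/-- `ℒ_{n,k} ⋯ ℒ_{n,1}` for a triangular array. -/
def arrTransfer (Tarr : ℕ → ℕ → CM lam Astar) (n : ℕ) : ℕ → (Circle1 → ℝ) → (Circle1 → ℝ)
  | 0, h => h
  | (k+1), h => transfer (Tarr n (k+1)) (arrTransfer Tarr n k h)

/-- `f_{n,k} = f ∘ T_{n,k} ∘ ⋯ ∘ T_{n,1}` evaluated at `x`. -/
def fnk (Tarr : ℕ → ℕ → CM lam Astar) (f : Circle1 → ℝ) (n k : ℕ) (x : Circle1) : ℝ :=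
  f (arrIter Tarr n k x)

/-- `ζₙ(x,t) = n⁻¹ (∑_{k<⌊nt⌋} f_{n,k}(x) + {nt}·f_{n,⌊nt⌋}(x))`. -/
def zetaP (Tarr : ℕ → ℕ → CM lam Astar) (f : Circle1 → ℝ) (n : ℕ) (x : Circle1) (t : ℝ) : ℝ :=
  (n : ℝ)⁻¹ * ((∑ k ∈ Finset.range ⌊(n : ℝ) * t⌋₊, fnk Tarr f n k x) +
    Int.fract ((n : ℝ) * t) * fnk Tarr f n ⌊(n : ℝ) * t⌋₊ x)

/-- `ξₙ(x,t) = √n ζₙ(x,t) − √n μ(ζₙ(·,t))` for a measure `μ`. -/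
def xiP (Tarr : ℕ → ℕ → CM lam Astar) (f : Circle1 → ℝ) (μ : Measure Circle1) (n : ℕ)
    (x : Circle1) (t : ℝ) : ℝ :=
  Real.sqrt n * zetaP Tarr f n x t - Real.sqrt n * ∫ y, zetaP Tarr f n y t ∂μ

/-- The Hölder continuity (exponent `η`) of the curve `γ` on `[0,1]`, w.r.t. `d_{C¹}`. -/
def HolderCurve (η : ℝ) (γ : ℝ → CM lam Astar) : Prop :=
  ∃ H : ℝ, ∀ s ∈ Icc (0:ℝ) 1, ∀ t ∈ Icc (0:ℝ) 1, dC1 (γ s) (γ t) ≤ H * |s - t| ^ η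

/-- The convergence-rate condition `sup_n n^η sup_t d_{C¹}(T_{n,⌊nt⌋}, γ_t) < ∞`. -/
def ArrayApprox (η : ℝ) (γ : ℝ → CM lam Astar) (Tarr : ℕ → ℕ → CM lam Astar) : Prop :=
  ∃ M : ℝ, ∀ n : ℕ, 1 ≤ n → ∀ t ∈ Icc (0:ℝ) 1,
    (n : ℝ) ^ η * dC1 (Tarr n ⌊(n : ℝ) * t⌋₊) (γ t) ≤ M

end QDS

/-- The path space: functions `[0,1] → ℝ` with the topology of uniform convergence;
continuous paths (with the supremum metric) embed isometrically. -/
abbrev PathSpace : Type := (Icc (0:ℝ) 1) →ᵤ ℝ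

instance : MeasurableSpace PathSpace := borel PathSpace

/-- A function `[0,1] → ℝ` (given as a function on `ℝ`) as a point of the path space. -/
def pathOf (g : ℝ → ℝ) : PathSpace := UniformFun.ofFun (fun t => g t)

/-- Evaluation of a path at time `t` (clamped to `[0,1]`). -/
def evalPath (t : ℝ) (ω : PathSpace) : ℝ := UniformFun.toFun ω (projIcc 0 1 zero_le_one t)


section Extra

variable {lam Astar : ℝ}

/-- `μ(ζₙ(·,t))` for the measure with density `ρ` w.r.t. `𝔪`. -/
def zetaMean (Tarr : ℕ → ℕ → CM lam Astar) (f : Circle1 → ℝ) (ρ : Circle1 → ℝ)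
    (n : ℕ) (t : ℝ) : ℝ :=
  ∫ y : Circle1, zetaP Tarr f n y t * ρ y

/-- `𝔪(ζₙ(·,t))`, the mean w.r.t. the Lebesgue measure. -/
def zetaMeanM (Tarr : ℕ → ℕ → CM lam Astar) (f : Circle1 → ℝ) (n : ℕ) (t : ℝ) : ℝ :=
  ∫ y : Circle1, zetaP Tarr f n y t

/-- `ξₙ(x,t) = √n ζₙ(x,t) − √n μ(ζₙ(·,t))`, where `μ` has density `ρ`. -/
def xiD (Tarr : ℕ → ℕ → CM lam Astar) (f : Circle1 → ℝ) (ρ : Circle1 → ℝ)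
    (n : ℕ) (x : Circle1) (t : ℝ) : ℝ :=
  Real.sqrt n * zetaP Tarr f n x t - Real.sqrt n * zetaMean Tarr f ρ n t

end Extra

/-- The σ-algebra `𝔉_t` on the path space, generated by the evaluations at times `s ∈ [0,t]`. -/
def pathFiltration (t : ℝ) : MeasurableSpace PathSpace :=
  ⨆ (s : ℝ) (_ : 0 ≤ s ∧ s ≤ t), MeasurableSpace.comap (evalPath s) (borel ℝ)

/-- The process `M_t(ω) = A(ω(t)) − A(ω(0)) − ½∫₀ᵗ σ̂ₛ²·A''(ω(s)) ds`. -/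
def MGproc (σ2 : ℝ → ℝ) (A : ℝ → ℝ) (t : ℝ) (ω : PathSpace) : ℝ :=
  A (evalPath t ω) - A (evalPath 0 ω) -
    (1/2) * ∫ s in (0:ℝ)..t, σ2 s * deriv (deriv A) (evalPath s ω)

/-- `P` solves the martingale problem on `C⁰([0,1],ℝ)` for the generator `½σ̂ₜ² d²/dx²`,
started at `0`:  `P` is a probability measure, concentrated on continuous paths starting at `0`,
and for every `A ∈ C_c^∞(ℝ)` the process `MGproc σ2 A` is a `P`-martingale w.r.t. the
natural filtration `𝔉_t`.  -/
def SolvesMartingaleProblem (σ2 : ℝ → ℝ) (P : Measure PathSpace) : Prop :=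
  IsProbabilityMeasure P ∧
  P {ω : PathSpace | evalPath 0 ω = 0} = 1 ∧
  P {ω : PathSpace | Continuous (UniformFun.toFun ω)} = 1 ∧
  ∀ A : ℝ → ℝ, ContDiff ℝ (⊤ : ℕ∞) A → HasCompactSupport A →
    (∀ t ∈ Icc (0:ℝ) 1, Integrable (MGproc σ2 A t) P) ∧
    (∀ t ∈ Icc (0:ℝ) 1, @Measurable PathSpace ℝ (pathFiltration t) _ (MGproc σ2 A t)) ∧
    (∀ s ∈ Icc (0:ℝ) 1, ∀ t ∈ Icc (0:ℝ) 1, s ≤ t →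
      P[MGproc σ2 A t | pathFiltration s] =ᵐ[P] MGproc σ2 A s)

end

section PartA
variable {lam Astar : ℝ}

lemma vp_coe_int (n : ℤ) : (((n : ℝ)) : Circle1) = 0 := by
  rw [AddCircle.coe_eq_zero_iff]
  exact ⟨n, by simp⟩

lemma vp_coe_add_int (x : ℝ) (n : ℤ) : ((x + n : ℝ) : Circle1) = (x : Circle1) := by
  rw [AddCircle.coe_add, vp_coe_int, add_zero]

lemma vp_F_add_nat (T : CM lam Astar) (x : ℝ) (n : ℕ) : T.F (x + n) = T.F x + n * T.deg := by
  induction n with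
  | zero => simp
  | succ n ih =>
    have : x + ((n + 1 : ℕ) : ℝ) = (x + n) + 1 := by push_cast; ring
    rw [this, T.lift_add_one, ih]; push_cast; ring

lemma vp_F_add_int (T : CM lam Astar) (x : ℝ) (n : ℤ) : T.F (x + n) = T.F x + n * T.deg := by
  obtain ⟨m, rfl | rfl⟩ := n.eq_nat_or_neg
  · simpa using vp_F_add_nat T x m
  · have := vp_F_add_nat T (x + ((-(m:ℤ) : ℤ) : ℝ)) m
    have h2 : x + ((-(m:ℤ) : ℤ) : ℝ) + m = x := by push_cast; ring
    rw [h2] at this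
    push_cast at *
    linarith

lemma vp_equivIco (x : ℝ) : ((AddCircle.equivIco 1 0 (x : Circle1) : ℝ)) = x + ((-⌊x⌋ : ℤ) : ℝ) := by
  have := AddCircle.coe_equivIco_mk_apply (1:ℝ) x
  rw [this, div_one, mul_one, Int.fract]; push_cast; ring

lemma vp_toMap_coe (T : CM lam Astar) (x : ℝ) : T.toMap (x : Circle1) = (T.F x : Circle1) := by
  unfold CM.toMap
  rw [vp_equivIco, vp_F_add_int]
  have : T.F x + ((-⌊x⌋ : ℤ) : ℝ) * (T.deg : ℝ) = T.F x + ((-⌊x⌋ * T.deg : ℤ) : ℝ) := by push_cast; ring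
  rw [this, vp_coe_add_int]

lemma vp_deriv_add_int (T : CM lam Astar) (x : ℝ) (n : ℤ) :
    deriv T.F (x + n) = deriv T.F x := by
  have h : (fun y => T.F (y + n)) = fun y => T.F y + n * T.deg := by
    funext y; exact vp_F_add_int T y n
  have h1 : deriv (fun y => T.F (y + n)) x = deriv T.F (x + n) := deriv_comp_add_const T.F _ _
  rw [← h1, h]; simp

lemma vp_dmap_coe (T : CM lam Astar) (x : ℝ) : T.dmap (x : Circle1) = deriv T.F x := by
  unfold CM.dmap
  rw [vp_equivIco, vp_deriv_add_int]

lemma vp_cont_iff {β : Type*} [TopologicalSpace β] (g : Circle1 → β) :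
    Continuous g ↔ Continuous (fun x : ℝ => g (x : Circle1)) :=
  (QuotientAddGroup.isOpenQuotientMap_mk).isQuotientMap.continuous_iff

lemma vp_hasDeriv (T : CM lam Astar) (x : ℝ) : HasDerivAt T.F (deriv T.F x) x :=
  ((T.contDiff.differentiable (by norm_num)) x).hasDerivAt

lemma vp_F_cont (T : CM lam Astar) : Continuous T.F := T.contDiff.continuous

lemma vp_dF_cont (T : CM lam Astar) : Continuous (deriv T.F) :=
  T.contDiff.continuous_deriv (by norm_num)

lemma vp_toMap_cont (T : CM lam Astar) : Continuous T.toMap := by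
  rw [vp_cont_iff]
  simp only [vp_toMap_coe]
  exact (AddCircle.continuous_mk' 1).comp (vp_F_cont T)

lemma vp_dmap_cont (T : CM lam Astar) : Continuous T.dmap := by
  rw [vp_cont_iff]
  simp only [vp_dmap_coe]
  exact vp_dF_cont T

lemma vp_dF_lip (T : CM lam Astar) (x y : ℝ) : |deriv T.F x - deriv T.F y| ≤ Astar * |x - y| := by
  have := Convex.norm_image_sub_le_of_norm_deriv_le (f := deriv T.F) (s := univ) (C := Astar) (x := y) (y := x)
    (fun z _ => by
      have : ContDiff ℝ 1 (deriv T.F) := by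
        have h2 : ContDiff ℝ (1 + 1) T.F := by
          have := T.contDiff; norm_num; exact this
        exact (contDiff_succ_iff_deriv.1 h2).2.2
      exact (this.differentiable (by norm_num)) z)
    (fun z _ => T.second_bound z) convex_univ (mem_univ _) (mem_univ _)
  simpa using this

lemma vp_F_expand (hlam : 1 < lam) (T : CM lam Astar) {x y : ℝ} (h : x ≤ y) :
    lam * (y - x) ≤ T.F y - T.F x :=
  mul_sub_le_image_sub_of_le_deriv (T.contDiff.differentiable (by norm_num)) (T.expanding) h

lemma vp_F_strictMono (hlam : 1 < lam) (T : CM lam Astar) : StrictMono T.F := by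
  intro x y h
  have := vp_F_expand hlam T h.le
  nlinarith

lemma vp_deg_pos (hlam : 1 < lam) (T : CM lam Astar) : 0 < T.deg := by
  have h1 := vp_F_expand hlam T (x := 0) (y := 0 + 1) (by norm_num)
  rw [T.lift_add_one] at h1
  have : (0:ℝ) < T.deg := by linarith
  exact_mod_cast this

lemma vp_F_surj (hlam : 1 < lam) (T : CM lam Astar) : Function.Surjective T.F := by
  apply (vp_F_cont T).surjective
  · refine tendsto_atTop_mono' _ ?_ (tendsto_atTop_add_const_right atTop (T.F 0) tendsto_id)
    filter_upwards [eventually_ge_atTop 0] with x hx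
    have := vp_F_expand hlam T hx
    simp only [id]
    nlinarith
  · refine tendsto_atBot_mono' _ ?_ (tendsto_atBot_add_const_right atBot (T.F 0) tendsto_id)
    filter_upwards [eventually_le_atBot 0] with x hx
    have := vp_F_expand hlam T hx
    simp only [id]
    nlinarith

/-- the inverse of the lift -/
noncomputable def vpG (hlam : 1 < lam) (T : CM lam Astar) : ℝ ≃o ℝ :=
  ((vp_F_strictMono hlam T).orderIsoOfSurjective T.F (vp_F_surj hlam T)).symm

lemma vp_FG (hlam : 1 < lam) (T : CM lam Astar) (x : ℝ) : T.F (vpG hlam T x) = x :=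
  ((vp_F_strictMono hlam T).orderIsoOfSurjective T.F (vp_F_surj hlam T)).apply_symm_apply x

lemma vp_GF (hlam : 1 < lam) (T : CM lam Astar) (x : ℝ) : vpG hlam T (T.F x) = x :=
  (vp_F_strictMono hlam T).injective (vp_FG hlam T _)

lemma vp_G_lip (hlam : 1 < lam) (T : CM lam Astar) (x y : ℝ) :
    lam * |vpG hlam T x - vpG hlam T y| ≤ |x - y| := by
  wlog h : y ≤ x generalizing x y
  · rw [abs_sub_comm, abs_sub_comm x]; exact this y x (le_of_not_ge h)
  have h1 : vpG hlam T y ≤ vpG hlam T x := (vpG hlam T).monotone h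
  have := vp_F_expand hlam T h1
  rw [vp_FG, vp_FG] at this
  rw [abs_of_nonneg (by linarith), abs_of_nonneg (by linarith)]
  exact this

lemma vp_G_add_deg (hlam : 1 < lam) (T : CM lam Astar) (x : ℝ) :
    vpG hlam T (x + T.deg) = vpG hlam T x + 1 := by
  apply (vp_F_strictMono hlam T).injective
  rw [vp_FG, T.lift_add_one, vp_FG]

end PartA

section PartB

/-- cone of densities, log-Lipschitz away from one cut point -/
def VCone (L : ℝ) (ψ : Circle1 → ℝ) : Prop :=
  ∃ z : ℝ, (∀ x ∈ Ioo z (z+1), 0 ≤ ψ (x : Circle1)) ∧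
    ∀ x ∈ Ioo z (z+1), ∀ y ∈ Ioo z (z+1),
      ψ (x : Circle1) ≤ Real.exp (L * |x - y|) * ψ (y : Circle1)

instance vp_prob : IsProbabilityMeasure (volume : Measure Circle1) :=
  ⟨by simp⟩

lemma vp_null (x : Circle1) : (volume : Measure Circle1) {x} = 0 := by
  have h := AddCircle.volume_closedBall (1:ℝ) (x := x) 0
  simpa using h

lemma vp_rep (z : ℝ) (c : Circle1) (hc : c ≠ (z : Circle1)) :
    ∃ x ∈ Ioo z (z+1), c = (x : Circle1) := by
  refine ⟨AddCircle.equivIco 1 z c, ⟨lt_of_le_of_ne (AddCircle.equivIco 1 z c).2.1 ?_,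
    (AddCircle.equivIco 1 z c).2.2⟩, AddCircle.coe_equivIco.symm⟩
  intro h
  apply hc
  rw [h]; exact AddCircle.coe_equivIco.symm

lemma vp_ae_rep (z : ℝ) : ∀ᵐ c : Circle1, ∃ x ∈ Ioo z (z+1), c = (x : Circle1) := by
  have : ∀ᵐ c : Circle1, c ≠ (z : Circle1) := by
    rw [ae_iff]; simpa only [ne_eq, not_not, setOf_eq_eq_singleton] using vp_null _
  filter_upwards [this] with c hc using vp_rep z c hc

lemma vp_cone_cont {L : ℝ} {ψ : Circle1 → ℝ} {z : ℝ}
    (h : ∀ x ∈ Ioo z (z+1), ∀ y ∈ Ioo z (z+1),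
      ψ (x : Circle1) ≤ Real.exp (L * |x - y|) * ψ (y : Circle1)) :
    ContinuousOn ψ {(z : Circle1)}ᶜ := by
  intro c hc
  apply ContinuousAt.continuousWithinAt
  have hc' : c ≠ (z : Circle1) := hc
  have e : ψ = (fun x : ℝ => ψ (x : Circle1)) ∘ (fun c => ((AddCircle.equivIco 1 z c : Ico z (z+1)) : ℝ)) := by
    funext c; simp only [Function.comp]; rw [AddCircle.coe_equivIco]
  have h1 : ContinuousAt (fun c => ((AddCircle.equivIco 1 z c : Ico z (z+1)) : ℝ)) c :=
    continuous_subtype_val.continuousAt.comp (AddCircle.continuousAt_equivIco 1 z hc')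
  rw [e]
  refine ContinuousAt.comp ?_ h1
  change ContinuousAt _ ((AddCircle.equivIco 1 z c : Ico z (z+1)) : ℝ)
  set y : ℝ := ((AddCircle.equivIco 1 z c : Ico z (z+1)) : ℝ) with hy
  have hyI : y ∈ Ioo z (z+1) := by
    refine ⟨lt_of_le_of_ne (AddCircle.equivIco 1 z c).2.1 ?_, (AddCircle.equivIco 1 z c).2.2⟩
    intro h; apply hc'; rw [h]; exact AddCircle.coe_equivIco.symm
  have hn : ∀ᶠ x in 𝓝 y, x ∈ Ioo z (z+1) := Ioo_mem_nhds hyI.1 hyI.2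
  have t1 : Tendsto (fun x : ℝ => Real.exp (L * |x - y|) * ψ (y : Circle1)) (𝓝 y) (𝓝 (ψ (y : Circle1))) := by
    have : Continuous (fun x : ℝ => Real.exp (L * |x - y|) * ψ (y : Circle1)) := by fun_prop
    have := this.tendsto y
    simpa using this
  have t2 : Tendsto (fun x : ℝ => Real.exp (-(L * |x - y|)) * ψ (y : Circle1)) (𝓝 y) (𝓝 (ψ (y : Circle1))) := by
    have : Continuous (fun x : ℝ => Real.exp (-(L * |x - y|)) * ψ (y : Circle1)) := by fun_prop
    have := this.tendsto y
    simpa using this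
  refine tendsto_of_tendsto_of_tendsto_of_le_of_le' t2 t1 ?_ ?_
  · filter_upwards [hn] with x hx
    have := h y hyI x hx
    rw [Real.exp_neg, inv_mul_le_iff₀ (Real.exp_pos _), abs_sub_comm]
    exact this
  · filter_upwards [hn] with x hx using h x hx y hyI

lemma vp_cone_meas {L : ℝ} {ψ : Circle1 → ℝ} (h : VCone L ψ) : Measurable ψ := by
  obtain ⟨z, -, h⟩ := h
  exact measurable_of_continuousOn_compl_singleton _ (vp_cone_cont h)

lemma vp_cone_bdd {L : ℝ} (hL : 0 ≤ L) {ψ : Circle1 → ℝ} (h : VCone L ψ) :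
    ∃ C, ∀ c, |ψ c| ≤ C := by
  obtain ⟨z, h0, h⟩ := h
  refine ⟨max |ψ (z : Circle1)| (Real.exp L * ψ ((z + 1/2 : ℝ) : Circle1)), fun c => ?_⟩
  by_cases hc : c = (z : Circle1)
  · rw [hc]; exact le_max_left _ _
  · obtain ⟨x, hx, rfl⟩ := vp_rep z c hc
    refine le_trans ?_ (le_max_right _ _)
    have hm : z + 1/2 ∈ Ioo z (z+1) := ⟨by linarith, by linarith⟩
    rw [abs_of_nonneg (h0 x hx)]
    refine (h x hx _ hm).trans ?_
    refine mul_le_mul_of_nonneg_right (Real.exp_le_exp.2 ?_) (h0 _ hm)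
    have : |x - (z + 1/2)| ≤ 1 := by rw [abs_le]; constructor <;> linarith [hx.1, hx.2]
    nlinarith

lemma vp_bdd_int {ψ : Circle1 → ℝ} (hm : Measurable ψ) {C : ℝ} (h : ∀ c, |ψ c| ≤ C) :
    Integrable ψ (volume : Measure Circle1) :=
  Integrable.of_bound hm.aestronglyMeasurable C (Eventually.of_forall h)

lemma vp_cone_int {L : ℝ} (hL : 0 ≤ L) {ψ : Circle1 → ℝ} (h : VCone L ψ) :
    Integrable ψ (volume : Measure Circle1) := by
  obtain ⟨C, hC⟩ := vp_cone_bdd hL h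
  exact vp_bdd_int (vp_cone_meas h) hC

lemma vp_cont_bdd {g : Circle1 → ℝ} (hg : Continuous g) : ∃ B, 0 ≤ B ∧ ∀ c, |g c| ≤ B := by
  obtain ⟨B, hB⟩ := isCompact_univ.exists_bound_of_continuousOn hg.continuousOn
  exact ⟨B, (norm_nonneg _).trans (hB 0 (mem_univ _)), fun c => hB c (mem_univ _)⟩

lemma vp_mul_int {g ψ : Circle1 → ℝ} (hg : Continuous g) (hψ : Integrable ψ (volume : Measure Circle1)) :
    Integrable (fun c => g c * ψ c) (volume : Measure Circle1) := by
  obtain ⟨B, -, hB⟩ := vp_cont_bdd hg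
  exact hψ.bdd_mul hg.aestronglyMeasurable (Eventually.of_forall hB)

lemma vp_cone_nonneg {L : ℝ} {ψ : Circle1 → ℝ} (h : VCone L ψ) :
    ∀ᵐ c : Circle1, 0 ≤ ψ c := by
  obtain ⟨z, h0, -⟩ := h
  filter_upwards [vp_ae_rep z] with c hc
  obtain ⟨x, hx, rfl⟩ := hc
  exact h0 x hx

/-- lower bound -/
lemma vp_cone_lower {L : ℝ} (hL : 0 ≤ L) {ψ : Circle1 → ℝ} {z : ℝ}
    (h0 : ∀ x ∈ Ioo z (z+1), 0 ≤ ψ (x : Circle1))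
    (h : ∀ x ∈ Ioo z (z+1), ∀ y ∈ Ioo z (z+1),
      ψ (x : Circle1) ≤ Real.exp (L * |x - y|) * ψ (y : Circle1)) {x : ℝ} (hx : x ∈ Ioo z (z+1)) :
    ∫ c : Circle1, ψ c ≤ Real.exp L * ψ (x : Circle1) := by
  have h1 : ∫ c : Circle1, ψ c ≤ ∫ c : Circle1, Real.exp L * ψ (x : Circle1) := by
    apply integral_mono_ae (vp_cone_int hL ⟨z, h0, h⟩) (integrable_const _)
    filter_upwards [vp_ae_rep z] with c hc
    obtain ⟨y, hy, rfl⟩ := hc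
    refine (h y hy x hx).trans ?_
    refine mul_le_mul_of_nonneg_right (Real.exp_le_exp.2 ?_) (h0 _ hx)
    have : |y - x| ≤ 1 := by rw [abs_le]; constructor <;> linarith [hx.1, hx.2, hy.1, hy.2]
    nlinarith
  simpa using h1

lemma vp_cone_mono {L L' : ℝ} (hLL : L ≤ L') {ψ : Circle1 → ℝ} (h : VCone L ψ) : VCone L' ψ := by
  obtain ⟨z, h0, h⟩ := h
  refine ⟨z, h0, fun x hx y hy => (h x hx y hy).trans ?_⟩
  exact mul_le_mul_of_nonneg_right (Real.exp_le_exp.2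
    (mul_le_mul_of_nonneg_right hLL (abs_nonneg _))) (h0 _ hy)

lemma vp_cone_const {L m : ℝ} (hL : 0 ≤ L) (hm : 0 ≤ m) : VCone L (fun _ => m) := by
  refine ⟨0, fun _ _ => hm, fun x _ y _ => ?_⟩
  have : 1 ≤ Real.exp (L * |x - y|) := Real.one_le_exp (by positivity)
  nlinarith

lemma vp_cone_smul {L m : ℝ} (hm : 0 ≤ m) {ψ : Circle1 → ℝ} (h : VCone L ψ) :
    VCone L (fun c => m * ψ c) := by
  obtain ⟨z, h0, h⟩ := h
  refine ⟨z, fun x hx => mul_nonneg hm (h0 x hx), fun x hx y hy => ?_⟩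
  have := mul_le_mul_of_nonneg_left (h x hx y hy) hm
  linarith

lemma vp_dist_le (x y : ℝ) : dist (x : Circle1) (y : Circle1) ≤ |x - y| := by
  rw [dist_eq_norm, ← AddCircle.coe_sub]
  exact QuotientAddGroup.norm_mk_le_norm

/-- product with a positive Lipschitz function -/
lemma vp_cone_mul {L : ℝ} {ψ : Circle1 → ℝ} (h : VCone L ψ) {K : NNReal} {f : Circle1 → ℝ}
    (hf : LipschitzWith K f) {D : ℝ} (hD : 0 ≤ D) (hpos : ∀ c, 0 ≤ f c) (hfD : ∀ c, (K:ℝ) ≤ D * f c) :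
    VCone (L + D) (fun c => f c * ψ c) := by
  obtain ⟨z, h0, h⟩ := h
  refine ⟨z, fun x hx => mul_nonneg (hpos _) (h0 x hx), fun x hx y hy => ?_⟩
  have h1 : f (x : Circle1) ≤ Real.exp (D * |x - y|) * f (y : Circle1) := by
    have a1 := hf.dist_le_mul (x : Circle1) (y : Circle1)
    rw [Real.dist_eq] at a1
    have a2 := vp_dist_le x y
    have a3 : f (x : Circle1) ≤ f (y : Circle1) + K * |x - y| := by
      have := le_abs_self (f (x : Circle1) - f (y : Circle1))
      have : (K:ℝ) * dist (x : Circle1) (y : Circle1) ≤ K * |x - y| :=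
        mul_le_mul_of_nonneg_left a2 K.2
      linarith
    have a4 := Real.add_one_le_exp (D * |x - y|)
    have a5 := mul_le_mul_of_nonneg_right (hfD (y : Circle1)) (abs_nonneg (x - y))
    have a6 := mul_le_mul_of_nonneg_right a4 (hpos (y : Circle1))
    nlinarith
  have h2 := h x hx y hy
  calc f (x : Circle1) * ψ (x : Circle1)
      ≤ (Real.exp (D * |x - y|) * f (y : Circle1)) * (Real.exp (L * |x - y|) * ψ (y : Circle1)) :=
        mul_le_mul h1 h2 (h0 x hx) (mul_nonneg (Real.exp_pos _).le (hpos _))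
    _ = Real.exp ((L + D) * |x - y|) * (f (y : Circle1) * ψ (y : Circle1)) := by
        rw [add_mul, Real.exp_add]; ring

/-- subtracting a constant -/
lemma vp_cone_sub {L β : ℝ} (hL : 0 ≤ L) (hβ : 1 < β) {ψ : Circle1 → ℝ} (h : VCone L ψ)
    {κ : ℝ} (hκ : β * κ * Real.exp L ≤ β - 1) (hκ0 : 0 ≤ κ) :
    VCone (β * L) (fun c => ψ c - κ * ∫ c : Circle1, ψ c) := by
  have hint : 0 ≤ ∫ c : Circle1, ψ c := integral_nonneg_of_ae (vp_cone_nonneg h)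
  obtain ⟨z, h0, h⟩ := h
  set m := ∫ c : Circle1, ψ c with hm
  have key : ∀ x ∈ Ioo z (z+1), β * (κ * m) ≤ (β - 1) * ψ (x : Circle1) := by
    intro x hx
    have h1 := vp_cone_lower hL h0 h hx
    rw [← hm] at h1
    calc β * (κ * m) = (β * κ) * m := by ring
      _ ≤ (β * κ) * (Real.exp L * ψ (x : Circle1)) := mul_le_mul_of_nonneg_left h1 (by positivity)
      _ = (β * κ * Real.exp L) * ψ (x : Circle1) := by ring
      _ ≤ _ := mul_le_mul_of_nonneg_right hκ (h0 x hx)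
  refine ⟨z, fun x hx => ?_, fun x hx y hy => ?_⟩
  · have h1 := key x hx
    have h2 := h0 x hx
    have h3 : 0 ≤ κ * m := by positivity
    nlinarith
  · have h1 := key y hy
    have h2 := h x hx y hy
    have h3 : 0 ≤ κ * m := by positivity
    have h4 := h0 y hy
    set u := Real.exp (L * |x - y|) - 1 with hu
    have hu0 : 0 ≤ u := by
      have := Real.one_le_exp (x := L * |x - y|) (by positivity); linarith
    have h5 : 1 + β * u ≤ Real.exp (β * L * |x - y|) := by
      have := one_add_mul_self_le_rpow_one_add (s := u) (by linarith) (p := β) hβ.le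
      refine this.trans (le_of_eq ?_)
      rw [hu, show 1 + (Real.exp (L * |x - y|) - 1) = Real.exp (L * |x - y|) by ring, ← Real.exp_mul]
      congr 1; ring
    have h6 : 0 ≤ ψ (y : Circle1) - κ * m := by nlinarith
    have h7 := mul_le_mul_of_nonneg_right h5 h6
    refine le_trans ?_ h7
    have h8 : ψ (x : Circle1) ≤ (1 + u) * ψ (y : Circle1) := by
      rw [hu]; linarith
    nlinarith

end PartB

section PartC
variable {lam Astar : ℝ}

lemma vp_push (hlam : 1 < lam) (hA : 0 < Astar) {L L' : ℝ} (hL' : 0 ≤ L')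
    (hLL : L' / lam + Astar ≤ L) (T : CM lam Astar) {ψ : Circle1 → ℝ} (h : VCone L' ψ) :
    ∃ φ, VCone L φ ∧ ∀ g : Circle1 → ℝ, Continuous g →
      ∫ c : Circle1, g (T.toMap c) * ψ c = ∫ c : Circle1, g c * φ c := by
  have hψm := vp_cone_meas h
  obtain ⟨C, hC⟩ := vp_cone_bdd hL' h
  obtain ⟨z, h0, h⟩ := h
  set G := vpG hlam T with hG
  obtain ⟨d, hd⟩ : ∃ d : ℕ, T.deg = (d : ℤ) := Int.eq_ofNat_of_zero_le (vp_deg_pos hlam T).le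
  have hd' : (T.deg : ℝ) = d := by rw [hd]; simp
  have hFpos : ∀ x, 0 < deriv T.F x := fun x => by linarith [T.expanding x]
  have hGd : ∀ x, G (x + d) = G x + 1 := fun x => by
    have := vp_G_add_deg hlam T x; rwa [hd'] at this
  set p : ℝ → ℝ := fun x => ψ ((G x : ℝ) : Circle1) / deriv T.F (G x) with hp
  have hpd : ∀ x, p (x + d) = p x := by
    intro x
    have e1 := vp_coe_add_int (G x) 1
    have e2 := vp_deriv_add_int T (G x) 1
    simp only [hp, hGd]
    push_cast at e1 e2
    rw [e1, e2]
  have hGc : Continuous G := G.continuous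
  have hpm : Measurable p := by
    refine Measurable.div ?_ ?_
    · exact hψm.comp ((AddCircle.continuous_mk' 1).comp hGc).measurable
    · exact ((vp_dF_cont T).comp hGc).measurable
  have hpb : ∀ x, |p x| ≤ C := by
    intro x
    simp only [hp, abs_div]
    rw [abs_of_pos (hFpos _), div_le_iff₀ (hFpos _)]
    have h1 := hC ((G x : ℝ) : Circle1)
    have h2 := T.expanding (G x)
    have h3 := abs_nonneg (ψ ((G x : ℝ) : Circle1))
    nlinarith
  have hper : Function.Periodic (fun x : ℝ => ∑ k ∈ Finset.range d, p (x + k)) 1 := by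
    intro x
    have e1 := Finset.sum_range_succ (fun k : ℕ => p (x + k)) d
    have e2 := Finset.sum_range_succ' (fun k : ℕ => p (x + k)) d
    have e3 : ∀ k : ℕ, p (x + 1 + k) = p (x + ((k + 1 : ℕ) : ℝ)) := by
      intro k; congr 1; push_cast; ring
    simp only [e3]
    have e4 := hpd x
    simp only [Nat.cast_zero, add_zero] at e2
    linarith
  refine ⟨hper.lift, ⟨T.F z, ?_, ?_⟩, ?_⟩
  · intro x hx
    have e : hper.lift (x : Circle1) = ∑ k ∈ Finset.range d, p (x + k) := hper.lift_coe x
    rw [e]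
    refine Finset.sum_nonneg fun k hk => ?_
    have hk' : (k : ℝ) + 1 ≤ d := by exact_mod_cast Finset.mem_range.1 hk
    have hk0 : (0 : ℝ) ≤ k := Nat.cast_nonneg _
    refine div_nonneg (h0 _ ⟨?_, ?_⟩) (hFpos _).le
    · have : z = G (T.F z) := (vp_GF hlam T z).symm
      rw [this]; exact G.strictMono (by linarith [hx.1])
    · have : z + 1 = G (T.F (z+1)) := (vp_GF hlam T _).symm
      rw [this]; apply G.strictMono
      rw [T.lift_add_one, hd']; linarith [hx.2]
  · intro x hx y hy
    have e : ∀ x : ℝ, hper.lift (x : Circle1) = ∑ k ∈ Finset.range d, p (x + k) := fun x => hper.lift_coe x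
    rw [e, e, Finset.mul_sum]
    refine Finset.sum_le_sum fun k hk => ?_
    have hk' : (k : ℝ) + 1 ≤ d := by exact_mod_cast Finset.mem_range.1 hk
    have hk0 : (0 : ℝ) ≤ k := Nat.cast_nonneg _
    have hmem : ∀ x ∈ Ioo (T.F z) (T.F z + 1), G (x + k) ∈ Ioo z (z+1) := by
      intro x hx
      constructor
      · have : z = G (T.F z) := (vp_GF hlam T z).symm
        rw [this]; exact G.strictMono (by linarith [hx.1])
      · have : z + 1 = G (T.F (z+1)) := (vp_GF hlam T _).symm
        rw [this]; apply G.strictMono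
        rw [T.lift_add_one, hd']; linarith [hx.2]
    have b1 := h _ (hmem x hx) _ (hmem y hy)
    set a := G (x + k) with ha
    set b := G (y + k) with hb
    have hab : lam * |a - b| ≤ |x - y| := by
      have := vp_G_lip hlam T (x + k) (y + k)
      simpa using this
    have hy0 := h0 b (hmem y hy)
    have b2 : deriv T.F b ≤ Real.exp (Astar * |x - y|) * deriv T.F a := by
      have c1 := vp_dF_lip T b a
      have c2 := le_abs_self (deriv T.F b - deriv T.F a)
      rw [abs_sub_comm b a] at c1
      have c3 := Real.add_one_le_exp (Astar * |x - y|)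
      have c4 := T.expanding a
      have c5 : |a - b| ≤ |x - y| := by nlinarith [abs_nonneg (a - b)]
      have c6 : Astar * |a - b| ≤ Astar * |x - y| := mul_le_mul_of_nonneg_left c5 hA.le
      have c7 : 0 ≤ Astar * |x - y| := by positivity
      nlinarith
    have b3 : Real.exp (L' * |a - b|) * Real.exp (Astar * |x - y|) ≤ Real.exp (L * |x - y|) := by
      rw [← Real.exp_add]
      apply Real.exp_le_exp.2
      have : L' * |a - b| ≤ L' / lam * |x - y| := by
        rw [div_mul_eq_mul_div, le_div_iff₀ (by linarith)]
        nlinarith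
      nlinarith [abs_nonneg (x - y)]
    change ψ (a : Circle1) / deriv T.F a ≤ Real.exp (L * |x - y|) * (ψ (b : Circle1) / deriv T.F b)
    rw [div_le_iff₀ (hFpos a)]
    calc ψ (a : Circle1) ≤ Real.exp (L' * |a - b|) * ψ (b : Circle1) := b1
      _ = Real.exp (L' * |a - b|) * (ψ (b : Circle1) / deriv T.F b) * deriv T.F b := by
          have := (hFpos b).ne'; field_simp
      _ ≤ Real.exp (L' * |a - b|) * (ψ (b : Circle1) / deriv T.F b) * (Real.exp (Astar * |x - y|) * deriv T.F a) := by
          refine mul_le_mul_of_nonneg_left b2 ?_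
          exact mul_nonneg (Real.exp_pos _).le (div_nonneg hy0 (hFpos b).le)
      _ = (Real.exp (L' * |a - b|) * Real.exp (Astar * |x - y|)) * (ψ (b : Circle1) / deriv T.F b * deriv T.F a) := by ring
      _ ≤ Real.exp (L * |x - y|) * (ψ (b : Circle1) / deriv T.F b * deriv T.F a) := by
          refine mul_le_mul_of_nonneg_right b3 ?_
          exact mul_nonneg (div_nonneg hy0 (hFpos b).le) (hFpos a).le
      _ = _ := by ring
  · intro g hg
    obtain ⟨B, hB0, hB⟩ := vp_cont_bdd hg
    set q : ℝ → ℝ := fun x => g (x : Circle1) * p x with hq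
    have hqm : Measurable q := (hg.comp (AddCircle.continuous_mk' 1)).measurable.mul hpm
    have hqb : ∀ x, ‖q x‖ ≤ B * C := by
      intro x
      rw [hq, Real.norm_eq_abs, abs_mul]
      exact mul_le_mul (hB _) (hpb _) (abs_nonneg _) hB0
    have hqi : ∀ a b : ℝ, IntervalIntegrable q volume a b := by
      intro a b
      rw [intervalIntegrable_iff]
      exact Measure.integrableOn_of_bounded (M := B * C) (by simp)
        hqm.aestronglyMeasurable (Eventually.of_forall hqb)
    have s1 : ∫ c : Circle1, g c * hper.lift c = ∫ x in (0:ℝ)..d, q x := by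
      rw [← AddCircle.intervalIntegral_preimage 1 0]
      have e : ∀ x : ℝ, g (x : Circle1) * hper.lift (x : Circle1) = ∑ k ∈ Finset.range d, q (x + k) := by
        intro x
        have : hper.lift (x : Circle1) = ∑ k ∈ Finset.range d, p (x + k) := hper.lift_coe x
        rw [this, Finset.mul_sum]
        refine Finset.sum_congr rfl fun k _ => ?_
        have := vp_coe_add_int x k
        push_cast at this
        simp only [hq, this]
      simp only [e]
      rw [intervalIntegral.integral_finsetSum]
      · have := intervalIntegral.sum_integral_adjacent_intervals (f := q) (μ := volume)
          (a := fun k : ℕ => (k : ℝ)) (n := d) (fun k _ => hqi _ _)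
        rw [show ((0:ℕ):ℝ) = 0 by simp] at this
        rw [← this]
        refine Finset.sum_congr rfl fun k _ => ?_
        rw [intervalIntegral.integral_comp_add_right]
        push_cast; congr 1 <;> ring
      · intro k _
        exact (hqi (0 + k) (0 + 1 + k)).comp_add_right k |>.congr_ae (by simp) |> fun h => by simpa using h
    have hd0 : (0:ℝ) ≤ d := Nat.cast_nonneg _
    rw [s1, intervalIntegral.integral_of_le hd0]
    have him : T.F '' Ioc (G 0) (G 0 + 1) = Ioc 0 (d : ℝ) := by
      ext x
      constructor
      · rintro ⟨y, hy, rfl⟩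
        have hmono := vp_F_strictMono hlam T
        constructor
        · have := hmono hy.1; rwa [hG, vp_FG] at this
        · have := hmono.monotone hy.2
          rw [T.lift_add_one, hG, vp_FG, hd'] at this; linarith
      · intro hx
        refine ⟨G x, ⟨G.strictMono hx.1, ?_⟩, vp_FG hlam T x⟩
        rw [← hGd]; exact G.monotone (by linarith [hx.2])
    rw [← him, integral_image_eq_integral_abs_deriv_smul measurableSet_Ioc
      (fun x _ => (vp_hasDeriv T x).hasDerivWithinAt) ((vp_F_strictMono hlam T).injective.injOn),
      ← AddCircle.integral_preimage 1 (G 0)]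
    refine integral_congr_ae (Eventually.of_forall fun y => ?_)
    simp only [hq, hp, smul_eq_mul]
    rw [abs_of_pos (hFpos y), vp_toMap_coe, hG, vp_GF]
    have := (hFpos y).ne'
    field_simp

end PartC

section PartD
variable {lam Astar : ℝ}

structure VPar (lam Astar L κ : ℝ) : Prop where
  hlam : 1 < lam
  hA : 0 < Astar
  hL : 1 ≤ L
  hκ0 : 0 < κ
  hκ1 : κ < 1
  hβ : ∃ β, 1 < β ∧ β * L / lam + Astar ≤ L ∧ β * κ * Real.exp L ≤ β - 1
  hL1 : (L - 1) / lam + Astar ≤ L - 1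

lemma vp_par (hlam : 1 < lam) (hA : 0 < Astar) (Lmin : ℝ) :
    ∃ L κ, VPar lam Astar L κ ∧ Lmin ≤ L - 1 := by
  set β := (1 + lam) / 2 with hβ
  have hβ1 : 1 < β := by rw [hβ]; linarith
  have hβ2 : β / lam < 1 := by rw [div_lt_one (by linarith)]; rw [hβ]; linarith
  set L1 := max (max Lmin 0) (Astar / (1 - β / lam)) with hL1
  have h0 : 0 ≤ L1 := (le_max_right _ _).trans (le_max_left _ _)
  have h1 : Astar ≤ L1 * (1 - β / lam) := by
    have : Astar / (1 - β / lam) ≤ L1 := le_max_right _ _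
    rwa [div_le_iff₀ (by linarith)] at this
  set κ := (β - 1) / (2 * β * Real.exp (L1 + 1)) with hκ
  have hexp : 1 ≤ Real.exp (L1 + 1) := Real.one_le_exp (by linarith)
  refine ⟨L1 + 1, κ, ⟨hlam, hA, by linarith, ?_, ?_, ⟨β, hβ1, ?_, ?_⟩, ?_⟩, ?_⟩
  · apply div_pos (by linarith); positivity
  · rw [hκ, div_lt_one (by positivity)]; nlinarith
  · rw [show β * (L1 + 1) / lam = (L1 + 1) * (β / lam) by ring]; nlinarith
  · rw [hκ]; field_simp; linarith
  · rw [show (L1 + 1 - 1) / lam = L1 * (1 / lam) by ring]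
    have : 1 / lam ≤ β / lam := div_le_div_of_nonneg_right hβ1.le (by linarith)
    nlinarith
  · simp only [add_sub_cancel_right]; exact (le_max_left _ _).trans (le_max_left _ _)

lemma vp_mapIter_add (S : ℕ → CM lam Astar) (i j : ℕ) :
    mapIter S (i + j) = mapIter (fun m => S (i + m)) j ∘ mapIter S i := by
  induction j with
  | zero => rfl
  | succ j ih =>
    change (S (i + j + 1)).toMap ∘ mapIter S (i + j) = _
    rw [ih]; rfl

lemma vp_mapIter_cont (S : ℕ → CM lam Astar) (i : ℕ) : Continuous (mapIter S i) := by
  induction i with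
  | zero => exact continuous_id
  | succ i ih => exact (vp_toMap_cont _).comp ih

lemma vp_mapIter_const (R : CM lam Astar) (i : ℕ) : mapIter (fun _ => R) i = R.toMap^[i] := by
  induction i with
  | zero => rfl
  | succ i ih => rw [Function.iterate_succ', ← ih]; rfl

lemma vp_abs_int_le {g ψ : Circle1 → ℝ} {B : ℝ}
    (hψ : Integrable ψ (volume : Measure Circle1)) (h0 : ∀ᵐ c : Circle1, 0 ≤ ψ c)
    (hB : ∀ c, |g c| ≤ B) : |∫ c : Circle1, g c * ψ c| ≤ B * ∫ c : Circle1, ψ c := by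
  rw [← integral_const_mul, ← Real.norm_eq_abs]
  refine norm_integral_le_of_norm_le (hψ.const_mul B) ?_
  filter_upwards [h0] with c hc
  rw [Real.norm_eq_abs, abs_mul, abs_of_nonneg hc]
  exact mul_le_mul_of_nonneg_right (hB c) hc

lemma vp_mem {L κ : ℝ} (P : VPar lam Astar L κ) (n : ℕ) :
    ∀ (S : ℕ → CM lam Astar) (ψ₁ ψ₂ : Circle1 → ℝ), VCone L ψ₁ → VCone L ψ₂ →
      ∫ c : Circle1, ψ₁ c = ∫ c : Circle1, ψ₂ c →
      ∀ (g : Circle1 → ℝ) (B : ℝ), Continuous g → (∀ c, |g c| ≤ B) →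
      |(∫ c : Circle1, g (mapIter S n c) * ψ₁ c) - ∫ c : Circle1, g (mapIter S n c) * ψ₂ c|
        ≤ 2 * B * (∫ c : Circle1, ψ₁ c) * (1 - κ) ^ n := by
  have hL0 : 0 ≤ L := by linarith [P.hL]
  induction n with
  | zero =>
    intro S ψ₁ ψ₂ h1 h2 hm g B hg hB
    have a1 := vp_abs_int_le (vp_cone_int hL0 h1) (vp_cone_nonneg h1) hB
    have a2 := vp_abs_int_le (vp_cone_int hL0 h2) (vp_cone_nonneg h2) hB
    simp only [mapIter, id, pow_zero, mul_one]
    rw [← hm] at a2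
    refine (abs_sub _ _).trans ?_
    linarith
  | succ n ih =>
    intro S ψ₁ ψ₂ h1 h2 hm g B hg hB
    obtain ⟨β, hβ1, hβ2, hβ3⟩ := P.hβ
    have e : mapIter S (n+1) = mapIter (fun m => S (1 + m)) n ∘ (S 1).toMap := by
      rw [add_comm n 1, vp_mapIter_add]; rfl
    have c1 := vp_cone_sub hL0 hβ1 h1 hβ3 P.hκ0.le
    have c2 := vp_cone_sub hL0 hβ1 h2 hβ3 P.hκ0.le
    have hLβ : 0 ≤ β * L := by nlinarith
    obtain ⟨φ₁, d1, e1⟩ := vp_push P.hlam P.hA hLβ hβ2 (S 1) c1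
    obtain ⟨φ₂, d2, e2⟩ := vp_push P.hlam P.hA hLβ hβ2 (S 1) c2
    have i1 := vp_cone_int hL0 h1
    have i2 := vp_cone_int hL0 h2
    set m := ∫ c : Circle1, ψ₁ c with hmd
    have m1 : ∫ c : Circle1, φ₁ c = (1 - κ) * m := by
      have := e1 (fun _ => 1) continuous_const
      simp only [one_mul] at this
      rw [← this, integral_sub i1 (integrable_const _)]
      simp; ring
    have m2 : ∫ c : Circle1, φ₂ c = (1 - κ) * m := by
      have := e2 (fun _ => 1) continuous_const
      simp only [one_mul] at this
      rw [← this, integral_sub i2 (integrable_const _), ← hm]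
      simp; ring
    have hgc : Continuous (fun c => g (mapIter (fun m => S (1 + m)) n c)) :=
      hg.comp (vp_mapIter_cont _ _)
    have hgc1 : Continuous (fun c => g (mapIter S (n+1) c)) :=
      hg.comp (vp_mapIter_cont _ _)
    have := ih (fun m => S (1 + m)) φ₁ φ₂ d1 d2 (m1.trans m2.symm) g B hg hB
    rw [← e1 _ hgc, ← e2 _ hgc, m1] at this
    have ee : ∀ c, g (mapIter (fun m => S (1 + m)) n ((S 1).toMap c)) = g (mapIter S (n+1) c) := by
      intro c; rw [e]; rfl
    simp only [ee, mul_sub] at this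
    rw [integral_sub (vp_mul_int hgc1 i1) (vp_mul_int hgc1 (integrable_const _)),
      integral_sub (vp_mul_int hgc1 i2) (vp_mul_int hgc1 (integrable_const _)), ← hm,
      sub_sub_sub_cancel_right] at this
    refine this.trans (le_of_eq ?_)
    rw [pow_succ]; ring

lemma vp_iterpush {L κ : ℝ} (P : VPar lam Astar L κ) (i : ℕ) :
    ∀ (S : ℕ → CM lam Astar) (ρ : Circle1 → ℝ), VCone (L - 1) ρ →
      ∃ φ, VCone (L - 1) φ ∧ ∀ g : Circle1 → ℝ, Continuous g →
        ∫ c : Circle1, g (mapIter S i c) * ρ c = ∫ c : Circle1, g c * φ c := by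
  have hL0 : 0 ≤ L - 1 := by linarith [P.hL]
  induction i with
  | zero => intro S ρ h; exact ⟨ρ, h, fun g _ => rfl⟩
  | succ i ih =>
    intro S ρ h
    obtain ⟨φ, h1, e1⟩ := ih S ρ h
    obtain ⟨φ', h2, e2⟩ := vp_push P.hlam P.hA hL0 P.hL1 (S (i+1)) h1
    refine ⟨φ', h2, fun g hg => ?_⟩
    rw [← e2 g hg]
    exact e1 (fun c => g ((S (i+1)).toMap c)) (hg.comp (vp_toMap_cont _))

/-- covariances -/
noncomputable def vcv (S : ℕ → CM lam Astar) (ρ f : Circle1 → ℝ) (i j : ℕ) : ℝ :=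
  (∫ c : Circle1, f (mapIter S i c) * f (mapIter S j c) * ρ c) -
    (∫ c : Circle1, f (mapIter S i c) * ρ c) * (∫ c : Circle1, f (mapIter S j c) * ρ c)

lemma vcv_symm (S : ℕ → CM lam Astar) (ρ f : Circle1 → ℝ) (i j : ℕ) :
    vcv S ρ f i j = vcv S ρ f j i := by
  unfold vcv
  rw [mul_comm (∫ c : Circle1, f (mapIter S i c) * ρ c)]
  simp only [mul_comm (f (mapIter S i _))]

/-- shifting covariances -/
lemma vcv_shift {L κ : ℝ} (P : VPar lam Astar L κ) (S : ℕ → CM lam Astar) {ρ f : Circle1 → ℝ}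
    (hρ : VCone (L - 1) ρ) (hf : Continuous f) (hm : ∫ c : Circle1, ρ c = 1) (i : ℕ) :
    ∃ φ, VCone (L - 1) φ ∧ ∫ c : Circle1, φ c = 1 ∧
      ∀ j k, vcv S ρ f (i + j) (i + k) = vcv (fun m => S (i + m)) φ f j k := by
  obtain ⟨φ, h1, e1⟩ := vp_iterpush P i S ρ hρ
  refine ⟨φ, h1, ?_, ?_⟩
  · have := e1 (fun _ => 1) continuous_const
    simp only [one_mul] at this
    rw [← this, hm]
  · intro j k
    have hj : Continuous (fun c => f (mapIter (fun m => S (i + m)) j c)) := hf.comp (vp_mapIter_cont _ _)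
    have hk : Continuous (fun c => f (mapIter (fun m => S (i + m)) k c)) := hf.comp (vp_mapIter_cont _ _)
    have e3 := e1 _ (hj.mul hk)
    simp only [Pi.mul_apply] at e3
    unfold vcv
    rw [← e1 _ hj, ← e1 _ hk, ← e3]
    simp only [vp_mapIter_add, Function.comp]

lemma vcv_decay {L κ : ℝ} (P : VPar lam Astar L κ) (S : ℕ → CM lam Astar) {ρ f : Circle1 → ℝ}
    (hρ : VCone (L - 1) ρ) (hm : ∫ c : Circle1, ρ c = 1) {K : NNReal} (hf : LipschitzWith K f)
    {B : ℝ} (hB : ∀ c, |f c| ≤ B) (i k : ℕ) :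
    |vcv S ρ f i (i + k)| ≤ 2 * B * (2 * B + K) * (1 - κ) ^ k := by
  have hL0 : 0 ≤ L - 1 := by linarith [P.hL]
  have hB0 : 0 ≤ B := (abs_nonneg _).trans (hB 0)
  obtain ⟨φ, h1, m1, e1⟩ := vcv_shift P S hρ hf.continuous hm i
  have := e1 0 k
  rw [add_zero] at this
  rw [this]
  have iφ := vp_cone_int hL0 h1
  set M := ∫ c : Circle1, f c * φ c with hM
  have hMB : |M| ≤ B := by
    have := vp_abs_int_le iφ (vp_cone_nonneg h1) hB
    rwa [m1, mul_one] at this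
  have hM2 := abs_le.1 hMB
  have c1 : VCone L (fun c => (f c + (B + K)) * φ c) := by
    have hlip : LipschitzWith K (fun c => f c + (B + K)) := by
      intro x y; simpa using hf x y
    have := vp_cone_mul h1 hlip (D := 1) zero_le_one
      (fun c => by have := abs_le.1 (hB c); have := K.2; linarith)
      (fun c => by have := abs_le.1 (hB c); linarith)
    simpa using this
  have c2 : VCone L (fun c => (M + (B + K)) * φ c) := by
    refine vp_cone_mono (by linarith) (vp_cone_smul ?_ h1)
    have := K.2; linarith
  have ifφ := vp_mul_int hf.continuous iφ
  have hmass1 : ∫ c : Circle1, (f c + (B + K)) * φ c = M + (B + K) := by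
    have : ∀ c, (f c + (B + K)) * φ c = f c * φ c + (B + K) * φ c := fun c => by ring
    simp only [this]
    rw [integral_add ifφ (iφ.const_mul (B + K)), integral_const_mul, m1, mul_one]
  have hmass2 : ∫ c : Circle1, (M + (B + K)) * φ c = M + (B + K) := by
    rw [integral_const_mul, m1, mul_one]
  have key := vp_mem P k (fun m => S (i + m)) _ _ c1 c2 (hmass1.trans hmass2.symm) f B hf.continuous hB
  have hk : Continuous (fun c => f (mapIter (fun m => S (i + m)) k c)) :=
    hf.continuous.comp (vp_mapIter_cont _ _)
  have e2 : (∫ c : Circle1, f (mapIter (fun m => S (i + m)) k c) * ((f c + (B + K)) * φ c)) -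
      ∫ c : Circle1, f (mapIter (fun m => S (i + m)) k c) * ((M + (B + K)) * φ c)
      = vcv (fun m => S (i + m)) φ f 0 k := by
    unfold vcv
    simp only [mapIter, id]
    rw [← hM, ← integral_const_mul, ← integral_sub, ← integral_sub]
    · congr 1; funext c; ring
    · exact (vp_mul_int (hf.continuous.mul hk) iφ)
    · exact (vp_mul_int hk iφ).const_mul M
    · exact vp_mul_int hk (vp_cone_int (by linarith) c1)
    · exact vp_mul_int hk (vp_cone_int (by linarith) c2)
  rw [e2, hmass1] at key
  refine key.trans ?_
  have hp : 0 ≤ (1 - κ) ^ k := pow_nonneg (by linarith [P.hκ1]) _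
  refine mul_le_mul_of_nonneg_right ?_ hp
  have hK := K.2
  nlinarith

end PartD

section PartE
variable {lam Astar : ℝ}

/-- Lipschitz functions as a subalgebra -/
def vpLipAlg : Subalgebra ℝ C(Circle1, ℝ) where
  carrier := {g | ∃ K : NNReal, LipschitzWith K g}
  mul_mem' := by
    rintro a b ⟨K₁, h1⟩ ⟨K₂, h2⟩
    obtain ⟨B₁, hB1, h1b⟩ := vp_cont_bdd a.continuous
    obtain ⟨B₂, hB2, h2b⟩ := vp_cont_bdd b.continuous
    refine ⟨Real.toNNReal (B₁ * K₂ + B₂ * K₁), LipschitzWith.of_dist_le_mul fun x y => ?_⟩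
    rw [Real.coe_toNNReal _ (by positivity)]
    have a1 := h1.dist_le_mul x y
    have a2 := h2.dist_le_mul x y
    rw [Real.dist_eq] at a1 a2 ⊢
    simp only [ContinuousMap.mul_apply]
    have e : a x * b x - a y * b y = a x * (b x - b y) + b y * (a x - a y) := by ring
    rw [e]
    refine (abs_add_le _ _).trans ?_
    rw [abs_mul, abs_mul]
    have b1 := mul_le_mul (h1b x) a2 (abs_nonneg _) hB1
    have b2 := mul_le_mul (h2b y) a1 (abs_nonneg _) hB2
    nlinarith
  add_mem' := by
    rintro a b ⟨K₁, h1⟩ ⟨K₂, h2⟩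
    exact ⟨K₁ + K₂, h1.add h2⟩
  algebraMap_mem' := by
    intro r
    exact ⟨0, LipschitzWith.const _⟩

lemma vp_lip_dense {ρ : Circle1 → ℝ} (hρ : Integrable ρ (volume : Measure Circle1)) {ε : ℝ} (hε : 0 < ε) :
    ∃ (h : Circle1 → ℝ) (K : NNReal), LipschitzWith K h ∧ ∫ c : Circle1, |ρ c - h c| ≤ ε := by
  obtain ⟨g, hg1, hg2⟩ := hρ.exists_boundedContinuous_integral_sub_le (half_pos hε)
  have hsep : (vpLipAlg).SeparatesPoints := by
    intro x y hxy
    refine ⟨fun c => dist c y, ⟨⟨fun c => dist c y, by fun_prop⟩, ⟨1, ?_⟩, rfl⟩, ?_⟩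
    · exact LipschitzWith.dist_left y
    · simp [hxy]
  have htop := ContinuousMap.subalgebra_topologicalClosure_eq_top_of_separatesPoints _ hsep
  have hmem : (g : C(Circle1, ℝ)) ∈ vpLipAlg.topologicalClosure := by rw [htop]; trivial
  have hcl : (g : C(Circle1, ℝ)) ∈ closure (vpLipAlg : Set C(Circle1, ℝ)) := hmem
  rw [Metric.mem_closure_iff] at hcl
  obtain ⟨h, ⟨K, hK⟩, hd⟩ := hcl (ε/2) (half_pos hε)
  refine ⟨h, K, hK, ?_⟩
  have hgh : ∀ c, |g c - h c| ≤ ε/2 := fun c => by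
    have := ContinuousMap.dist_apply_le_dist (f := (g : C(Circle1, ℝ))) (g := h) c
    rw [Real.dist_eq] at this
    exact this.trans hd.le
  have hhi : Integrable (fun c => h c) (volume : Measure Circle1) := by
    obtain ⟨B, -, hB⟩ := vp_cont_bdd h.continuous
    exact vp_bdd_int h.continuous.measurable hB
  calc ∫ c : Circle1, |ρ c - h c| ≤ ∫ c : Circle1, (‖ρ c - g c‖ + ε/2) := by
        apply integral_mono (hρ.sub hhi).abs ((hρ.sub hg2).norm.add (integrable_const _))
        intro c
        have e : ρ c - h c = (ρ c - g c) + (g c - h c) := by ring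
        change |ρ c - h c| ≤ ‖ρ c - g c‖ + ε/2
        rw [e]
        refine (abs_add_le _ _).trans ?_
        rw [Real.norm_eq_abs]
        linarith [hgh c]
    _ ≤ ε := by
        have hgi : Integrable (fun c => ‖ρ c - g c‖) (volume : Measure Circle1) := (hρ.sub hg2).norm
        rw [integral_add hgi (integrable_const _)]
        have e2 : ∫ _ : Circle1, ε/2 = ε/2 := by simp
        rw [e2]; linarith

lemma vp_mix {L κ : ℝ} (P : VPar lam Astar L κ) (R : CM lam Astar) {h g : Circle1 → ℝ} {K : NNReal}
    (hh : LipschitzWith K h) (hg : Continuous g) {B : ℝ} (hB : ∀ c, |g c| ≤ B) :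
    ∃ C, ∀ M, |(∫ c : Circle1, g (mapIter (fun _ => R) M c) * h c) -
      (∫ c : Circle1, h c) * ∫ c : Circle1, g (mapIter (fun _ => R) M c)| ≤ C * (1 - κ) ^ M := by
  obtain ⟨D, hD0, hD⟩ := vp_cont_bdd hh.continuous
  have hL := P.hL
  have hK := K.2
  set d : ℝ := D + K with hd
  have ih : Integrable h (volume : Measure Circle1) := vp_bdd_int hh.continuous.measurable hD
  have c1 : VCone L (fun c => h c + d) := by
    have hlip : LipschitzWith K (fun c => h c + d) := by
      intro x y; simpa using hh x y
    have := vp_cone_mul (vp_cone_const (L := 0) (m := 1) le_rfl zero_le_one) hlip (D := 1) zero_le_one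
      (fun c => by have := abs_le.1 (hD c); linarith)
      (fun c => by have := abs_le.1 (hD c); linarith)
    refine vp_cone_mono (by linarith) (L := 0 + 1) ?_
    simpa using this
  have m1 : ∫ c : Circle1, (h c + d) = (∫ c : Circle1, h c) + d := by
    rw [integral_add ih (integrable_const _)]; simp
  have hpos : 0 ≤ (∫ c : Circle1, h c) + d := by
    rw [← m1]; exact integral_nonneg_of_ae (vp_cone_nonneg c1)
  have c2 : VCone L (fun _ => (∫ c : Circle1, h c) + d) := vp_cone_const (by linarith) hpos
  refine ⟨2 * B * ((∫ c : Circle1, h c) + d), fun M => ?_⟩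
  have key := vp_mem P M (fun _ => R) _ _ c1 c2 (by rw [m1]; simp) g B hg hB
  rw [m1] at key
  refine le_trans (le_of_eq ?_) key
  congr 1
  have hgc : Continuous (fun c => g (mapIter (fun _ => R) M c)) := hg.comp (vp_mapIter_cont _ _)
  have ig : Integrable (fun c => g (mapIter (fun _ => R) M c)) (volume : Measure Circle1) :=
    vp_bdd_int hgc.measurable (fun c => hB _)
  simp only [mul_add]
  rw [integral_add (vp_mul_int hgc ih) (ig.mul_const _),
    integral_add (ig.mul_const _) (ig.mul_const _), integral_mul_const, integral_mul_const]
  ring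

lemma vp_inv (R : CM lam Astar) {ρ g : Circle1 → ℝ} (hρ : IsSRBDensity R ρ) (hg : Continuous g) :
    ∫ c : Circle1, g (R.toMap c) * ρ c = ∫ c : Circle1, g c * ρ c := by
  obtain ⟨⟨hi, -, h0⟩, -, hinv⟩ := hρ
  have ham : AEMeasurable (fun x => ENNReal.ofReal (ρ x)) (volume : Measure Circle1) :=
    hi.aemeasurable.ennreal_ofReal
  have e : ∀ u : Circle1 → ℝ, ∫ c, u c ∂(volume.withDensity (fun x => ENNReal.ofReal (ρ x))) =
      ∫ c : Circle1, u c * ρ c := by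
    intro u
    rw [integral_withDensity_eq_integral_toReal_smul₀ ham (Eventually.of_forall fun _ => ENNReal.ofReal_lt_top)]
    congr 1; funext c
    rw [ENNReal.toReal_ofReal (h0 c), smul_eq_mul, mul_comm]
  rw [← e g, ← hinv, integral_map (vp_toMap_cont R).measurable.aemeasurable hg.aestronglyMeasurable,
    ← e]

lemma vp_inv_iter (R : CM lam Astar) {ρ : Circle1 → ℝ} (hρ : IsSRBDensity R ρ) (M : ℕ) :
    ∀ {g : Circle1 → ℝ}, Continuous g →
    ∫ c : Circle1, g (mapIter (fun _ => R) M c) * ρ c = ∫ c : Circle1, g c * ρ c := by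
  induction M with
  | zero => intro g _; rfl
  | succ M ih =>
    intro g hg
    have := ih (g := fun c => g (R.toMap c)) (hg.comp (vp_toMap_cont R))
    rw [← vp_inv R hρ hg, ← this]; rfl

lemma vp_abs_int_le' {g ψ : Circle1 → ℝ} {B : ℝ}
    (hψ : Integrable ψ (volume : Measure Circle1)) 
    (hB : ∀ c, |g c| ≤ B) : |∫ c : Circle1, g c * ψ c| ≤ B * ∫ c : Circle1, |ψ c| := by
  rw [← integral_const_mul, ← Real.norm_eq_abs]
  refine norm_integral_le_of_norm_le (hψ.abs.const_mul B) (Eventually.of_forall fun c => ?_)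
  rw [Real.norm_eq_abs, abs_mul]
  exact mul_le_mul_of_nonneg_right (hB c) (abs_nonneg _)

lemma vp_int_bd {g : Circle1 → ℝ} {B : ℝ}
    (hB : ∀ c, |g c| ≤ B) : |∫ c : Circle1, g c| ≤ B := by
  have := vp_abs_int_le' (g := g) (ψ := fun _ => 1) (integrable_const _) hB
  simpa using this

lemma vp_conv {L κ : ℝ} (P : VPar lam Astar L κ) (R : CM lam Astar) {ρ g : Circle1 → ℝ}
    (hρ : IsSRBDensity R ρ) (hg : Continuous g) :
    Tendsto (fun M => ∫ c : Circle1, g (mapIter (fun _ => R) M c)) atTop (𝓝 (∫ c : Circle1, g c * ρ c)) := by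
  obtain ⟨B, hB0, hB⟩ := vp_cont_bdd hg
  have hi := hρ.1.1
  have h1 := hρ.1.2.1
  rw [Metric.tendsto_atTop]
  intro ε hε
  obtain ⟨h, K, hh, hd⟩ := vp_lip_dense hi (ε := ε / (4 * (B + 1))) (by positivity)
  obtain ⟨C, hC⟩ := vp_mix P R hh hg hB
  have t : Tendsto (fun M : ℕ => C * (1 - κ) ^ M) atTop (𝓝 (C * 0)) :=
    (tendsto_pow_atTop_nhds_zero_of_lt_one (by linarith [P.hκ1]) (by linarith [P.hκ0])).const_mul C
  rw [mul_zero] at t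
  obtain ⟨N, hN⟩ := (t.eventually (gt_mem_nhds (half_pos hε))).exists_forall_of_atTop
  refine ⟨N, fun M hM => ?_⟩
  have hgc : Continuous (fun c => g (mapIter (fun _ => R) M c)) := hg.comp (vp_mapIter_cont _ _)
  obtain ⟨D, hD0, hD⟩ := vp_cont_bdd hh.continuous
  have ih : Integrable h (volume : Measure Circle1) := vp_bdd_int hh.continuous.measurable hD
  have e1 := vp_inv_iter R hρ M hg
  have b1 : |∫ c : Circle1, g (mapIter (fun _ => R) M c) * (ρ c - h c)| ≤ B * (ε / (4 * (B + 1))) :=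
    (vp_abs_int_le' (hi.sub ih) (fun c => hB _)).trans (mul_le_mul_of_nonneg_left hd hB0)
  simp only [mul_sub] at b1
  rw [integral_sub (vp_mul_int hgc hi) (vp_mul_int hgc ih), e1] at b1
  have b2 := hC M
  have b3 := hN M hM
  have b4 : |1 - ∫ c : Circle1, h c| ≤ ε / (4 * (B + 1)) := by
    have e4 : 1 - ∫ c : Circle1, h c = ∫ c : Circle1, (ρ c - h c) := by rw [integral_sub hi ih, h1]
    rw [e4]
    exact (abs_integral_le_integral_abs).trans hd
  have b5 := vp_int_bd (g := fun c => g (mapIter (fun _ => R) M c)) (fun c => hB _)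
  set X := ∫ c : Circle1, g (mapIter (fun _ => R) M c)
  set Y := ∫ c : Circle1, g c * ρ c
  set Z := ∫ c : Circle1, g (mapIter (fun _ => R) M c) * h c
  set H := ∫ c : Circle1, h c
  have b6 : |(1 - H) * X| ≤ (ε / (4 * (B + 1))) * B := by
    rw [abs_mul]; exact mul_le_mul b4 b5 (abs_nonneg _) (by positivity)
  have b7 : B * (ε / (4 * (B + 1))) < ε / 4 := by
    rw [mul_div_assoc', div_lt_div_iff₀ (by positivity) (by norm_num)]; nlinarith
  rw [Real.dist_eq, abs_lt]
  rw [abs_le] at b1 b2 b6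
  constructor <;> nlinarith

lemma vp_stat {L κ : ℝ} (P : VPar lam Astar L κ) (R : CM lam Astar) {ρ g : Circle1 → ℝ}
    (hρ : IsSRBDensity R ρ) (hg : Continuous g) {B : ℝ} (hB : ∀ c, |g c| ≤ B) (M : ℕ) :
    |(∫ c : Circle1, g c * ρ c) - ∫ c : Circle1, g (mapIter (fun _ => R) M c)| ≤ 2 * B * (1 - κ) ^ M := by
  have hL := P.hL
  have t := ((vp_conv P R hρ hg).comp (tendsto_add_atTop_nat M)).sub_const
    (∫ c : Circle1, g (mapIter (fun _ => R) M c)) |>.abs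
  refine le_of_tendsto t (Eventually.of_forall fun j => ?_)
  simp only [Function.comp]
  have h1 : VCone (L - 1) (fun _ : Circle1 => (1:ℝ)) := vp_cone_const (by linarith) zero_le_one
  obtain ⟨φ, hφ, e⟩ := vp_iterpush P j (fun _ => R) _ h1
  have hgc : Continuous (fun c => g (mapIter (fun _ => R) M c)) := hg.comp (vp_mapIter_cont _ _)
  have m1 : ∫ c : Circle1, φ c = 1 := by
    have := e (fun _ => 1) continuous_const
    simp only [one_mul] at this
    rw [← this]; simp
  have e2 := e _ hgc
  have key := vp_mem P M (fun _ => R) _ _ (vp_cone_mono (by linarith) hφ)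
    (vp_cone_mono (L' := L) (by linarith) h1) (by rw [m1]; simp) g B hg hB
  rw [← e2, m1] at key
  simp only [mul_one] at key
  rw [vp_mapIter_add]
  exact key

lemma vp_iter_close {R : CM lam Astar} {Λ δ : ℝ} (hΛ : 0 ≤ Λ)
    (hR : ∀ x y, dist (R.toMap x) (R.toMap y) ≤ Λ * dist x y) (S : ℕ → CM lam Astar) (N : ℕ)
    (hS : ∀ m, 1 ≤ m → m ≤ N → ∀ x, dist ((S m).toMap x) (R.toMap x) ≤ δ) (x : Circle1) :
    dist (mapIter S N x) (mapIter (fun _ => R) N x) ≤ δ * ∑ j ∈ Finset.range N, Λ ^ j := by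
  induction N with
  | zero => simp [mapIter]
  | succ N ih =>
    have h1 := ih (fun m a b => hS m a (by omega))
    have h2 := hS (N+1) (by omega) le_rfl (mapIter S N x)
    have h3 := hR (mapIter S N x) (mapIter (fun _ => R) N x)
    have h4 := dist_triangle ((S (N+1)).toMap (mapIter S N x)) (R.toMap (mapIter S N x))
      (R.toMap (mapIter (fun _ => R) N x))
    have h5 := mul_le_mul_of_nonneg_left h1 hΛ
    have e : ∑ j ∈ Finset.range (N+1), Λ ^ j = Λ * (∑ j ∈ Finset.range N, Λ ^ j) + 1 := by
      rw [Finset.sum_range_succ', Finset.mul_sum]; simp [pow_succ']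
    rw [e]
    change dist ((S (N+1)).toMap (mapIter S N x)) (R.toMap (mapIter (fun _ => R) N x)) ≤ _
    nlinarith

lemma vp_three {a₁ a₂ b₁ b₂ c₁ c₂ B u v w : ℝ} (ha : |a₁ - a₂| ≤ u) (hb : |b₁ - b₂| ≤ v)
    (hc : |c₁ - c₂| ≤ w) (hb2 : |b₂| ≤ B) (hc1 : |c₁| ≤ B) :
    |(a₁ - b₁ * c₁) - (a₂ - b₂ * c₂)| ≤ u + v * B + B * w := by
  have e : (a₁ - b₁ * c₁) - (a₂ - b₂ * c₂) = (a₁ - a₂) + (-((b₁ - b₂) * c₁)) + (-(b₂ * (c₁ - c₂))) := by ring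
  rw [e]
  refine (abs_add_three _ _ _).trans ?_
  rw [abs_neg, abs_neg, abs_mul, abs_mul]
  have h1 := mul_le_mul hb hc1 (abs_nonneg _) ((abs_nonneg _).trans hb)
  have h2 := mul_le_mul hb2 hc (abs_nonneg _) ((abs_nonneg _).trans hb2)
  linarith

end PartE

section PartF
variable {lam Astar : ℝ}

lemma vp_f2_bd {f : Circle1 → ℝ} {B : ℝ} (hB : ∀ c, |f c| ≤ B) (x y : Circle1) :
    |f x * f y| ≤ B * B := by
  rw [abs_mul]; exact mul_le_mul (hB x) (hB y) (abs_nonneg _) ((abs_nonneg _).trans (hB x))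

lemma vcv_step1 {L κ : ℝ} (P : VPar lam Astar L κ) (S : ℕ → CM lam Astar) {φ f : Circle1 → ℝ}
    (hφ : VCone L φ) (hm : ∫ c : Circle1, φ c = 1) (hf : Continuous f)
    {B : ℝ} (hB : ∀ c, |f c| ≤ B) (M k : ℕ) :
    |vcv S φ f M (M + k) - vcv S (fun _ => 1) f M (M + k)| ≤ 6 * B * B * (1 - κ) ^ M := by
  have hL := P.hL
  have h1 : VCone L (fun _ : Circle1 => (1:ℝ)) := vp_cone_const (by linarith) zero_le_one
  have me : ∫ c : Circle1, φ c = ∫ _ : Circle1, (1:ℝ) := by rw [hm]; simp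
  have hk : Continuous (fun c => f (mapIter (fun m => S (M + m)) k c)) :=
    hf.comp (vp_mapIter_cont _ _)
  have ka := vp_mem P M S φ _ hφ h1 me (fun c => f c * f (mapIter (fun m => S (M + m)) k c)) (B * B)
    (hf.mul hk) (fun c => vp_f2_bd hB _ _)
  have kb := vp_mem P M S φ _ hφ h1 me f B hf hB
  have kc := vp_mem P M S φ _ hφ h1 me _ B hk (fun c => hB _)
  rw [hm] at ka kb kc
  have b2 : |∫ c : Circle1, f (mapIter S M c) * 1| ≤ B := by
    simp only [mul_one]; exact vp_int_bd (fun c => hB _)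
  have c1 : |∫ c : Circle1, f (mapIter (fun m => S (M + m)) k (mapIter S M c)) * φ c| ≤ B := by
    have := vp_abs_int_le (g := fun c => f (mapIter (fun m => S (M + m)) k (mapIter S M c)))
      (vp_cone_int (by linarith) hφ) (vp_cone_nonneg hφ) (fun c => hB _)
    rwa [hm, mul_one] at this
  have := vp_three ka kb kc b2 c1
  unfold vcv
  rw [vp_mapIter_add]
  refine le_trans this (le_of_eq (by ring))

lemma vp_int_diff {g g' : Circle1 → ℝ} {u : ℝ} (hg : Continuous g) (hg' : Continuous g')
    (h : ∀ c, |g c - g' c| ≤ u) : |(∫ c : Circle1, g c * 1) - ∫ c : Circle1, g' c * 1| ≤ u := by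
  simp only [mul_one]
  obtain ⟨B, -, hB⟩ := vp_cont_bdd hg
  obtain ⟨B', -, hB'⟩ := vp_cont_bdd hg'
  rw [← integral_sub (vp_bdd_int hg.measurable hB) (vp_bdd_int hg'.measurable hB')]
  exact vp_int_bd h

lemma vcv_step2 (S S' : ℕ → CM lam Astar) {f : Circle1 → ℝ} {K : NNReal}
    (hf : LipschitzWith K f) {B : ℝ} (hB : ∀ c, |f c| ≤ B) (i j : ℕ) {D : ℝ}
    (h1 : ∀ c, dist (mapIter S i c) (mapIter S' i c) ≤ D)
    (h2 : ∀ c, dist (mapIter S j c) (mapIter S' j c) ≤ D) :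
    |vcv S (fun _ => 1) f i j - vcv S' (fun _ => 1) f i j| ≤ 4 * B * K * D := by
  have hc : ∀ (S : ℕ → CM lam Astar) i, Continuous (fun c => f (mapIter S i c)) := fun S i =>
    hf.continuous.comp (vp_mapIter_cont _ _)
  have hB0 : 0 ≤ B := (abs_nonneg _).trans (hB 0)
  have hK := K.2
  have d1 : ∀ c, |f (mapIter S i c) - f (mapIter S' i c)| ≤ K * D := fun c => by
    rw [← Real.dist_eq]
    exact (hf.dist_le_mul _ _).trans (mul_le_mul_of_nonneg_left (h1 c) hK)
  have d2 : ∀ c, |f (mapIter S j c) - f (mapIter S' j c)| ≤ K * D := fun c => by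
    rw [← Real.dist_eq]
    exact (hf.dist_le_mul _ _).trans (mul_le_mul_of_nonneg_left (h2 c) hK)
  have ka := vp_int_diff ((hc S i).mul (hc S j)) ((hc S' i).mul (hc S' j)) (u := 2 * B * (K * D))
    (fun c => by
      have e : f (mapIter S i c) * f (mapIter S j c) - f (mapIter S' i c) * f (mapIter S' j c) =
        (f (mapIter S i c) - f (mapIter S' i c)) * f (mapIter S j c) +
        f (mapIter S' i c) * (f (mapIter S j c) - f (mapIter S' j c)) := by ring
      change |f (mapIter S i c) * f (mapIter S j c) - f (mapIter S' i c) * f (mapIter S' j c)| ≤ _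
      rw [e]
      refine (abs_add_le _ _).trans ?_
      rw [abs_mul, abs_mul]
      have a1 := mul_le_mul (d1 c) (hB (mapIter S j c)) (abs_nonneg _) ((abs_nonneg _).trans (d1 c))
      have a2 := mul_le_mul (hB (mapIter S' i c)) (d2 c) (abs_nonneg _) hB0
      linarith)
  have kb := vp_int_diff (hc S i) (hc S' i) d1
  have kc := vp_int_diff (hc S j) (hc S' j) d2
  have b2 : |∫ c : Circle1, f (mapIter S' i c) * 1| ≤ B := by
    simp only [mul_one]; exact vp_int_bd (fun c => hB _)
  have c1 : |∫ c : Circle1, f (mapIter S j c) * 1| ≤ B := by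
    simp only [mul_one]; exact vp_int_bd (fun c => hB _)
  have := vp_three ka kb kc b2 c1
  refine le_trans this (le_of_eq (by ring))

lemma vcv_step3 {L κ : ℝ} (P : VPar lam Astar L κ) (R : CM lam Astar) {ρ f : Circle1 → ℝ}
    (hρ : IsSRBDensity R ρ) (hf : Continuous f)
    {B : ℝ} (hB : ∀ c, |f c| ≤ B) (M k : ℕ) :
    |vcv (fun _ => R) ρ f 0 k - vcv (fun _ => R) (fun _ => 1) f M (M + k)| ≤ 6 * B * B * (1 - κ) ^ M := by
  have hk : Continuous (fun c => f (mapIter (fun _ => R) k c)) :=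
    hf.comp (vp_mapIter_cont _ _)
  have ka := vp_stat P R hρ (hf.mul hk) (B := B * B) (fun c => vp_f2_bd hB _ _) M
  have kb := vp_stat P R hρ hf hB M
  have kc := vp_stat P R hρ hk (fun c => hB _) M
  have b2 : |∫ c : Circle1, f (mapIter (fun _ => R) M c)| ≤ B := vp_int_bd (fun c => hB _)
  have c1 : |∫ c : Circle1, f (mapIter (fun _ => R) k c) * ρ c| ≤ B := by
    have := vp_abs_int_le (g := fun c => f (mapIter (fun _ => R) k c)) hρ.1.1
      (Eventually.of_forall hρ.1.2.2) (fun c => hB _)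
    rwa [hρ.1.2.1, mul_one] at this
  have := vp_three ka kb kc b2 c1
  unfold vcv
  rw [vp_mapIter_add]
  simp only [mul_one]
  refine le_trans this (le_of_eq (by ring))

lemma vcv_close {L κ : ℝ} (P : VPar lam Astar L κ) (S : ℕ → CM lam Astar) {ρ f : Circle1 → ℝ}
    (hρ : VCone (L - 1) ρ) (hm : ∫ c : Circle1, ρ c = 1) {K : NNReal} (hf : LipschitzWith K f)
    {B : ℝ} (hB : ∀ c, |f c| ≤ B) {R : CM lam Astar} {ρh : Circle1 → ℝ} (hR : IsSRBDensity R ρh)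
    {Λ δ : ℝ} (hΛ : 0 ≤ Λ) (hδ : 0 ≤ δ)
    (hRL : ∀ x y, dist (R.toMap x) (R.toMap y) ≤ Λ * dist x y) (M i k : ℕ) (hMi : M ≤ i)
    (hS : ∀ m, i - M < m → m ≤ i + k → ∀ x, dist ((S m).toMap x) (R.toMap x) ≤ δ) :
    |vcv S ρ f i (i + k) - vcv (fun _ => R) ρh f 0 k| ≤
      12 * B * B * (1 - κ) ^ M + 4 * B * K * (δ * ∑ j ∈ Finset.range (M + k), Λ ^ j) := by
  obtain ⟨φ, h1, m1, e1⟩ := vcv_shift P S hρ hf.continuous hm (i - M)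
  have e2 := e1 M (M + k)
  rw [← add_assoc, Nat.sub_add_cancel hMi] at e2
  rw [e2]
  set S' := fun m => S (i - M + m)
  have s1 := vcv_step1 P S' (vp_cone_mono (by linarith) h1) m1 hf.continuous hB M k
  have hsum : ∑ j ∈ Finset.range M, Λ ^ j ≤ ∑ j ∈ Finset.range (M + k), Λ ^ j :=
    Finset.sum_le_sum_of_subset_of_nonneg (Finset.range_mono (by omega)) (fun _ _ _ => by positivity)
  have s2 := vcv_step2 S' (fun _ => R) hf hB M (M + k) (D := δ * ∑ j ∈ Finset.range (M + k), Λ ^ j)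
    (fun c => (vp_iter_close hΛ hRL S' M (fun m a b => hS _ (by omega) (by omega)) c).trans
      (mul_le_mul_of_nonneg_left hsum hδ))
    (fun c => vp_iter_close hΛ hRL S' (M + k) (fun m a b => hS _ (by omega) (by omega)) c)
  have s3 := vcv_step3 P R hR hf.continuous hB M k
  rw [abs_le] at *
  constructor <;> linarith [s1.1, s1.2, s2.1, s2.2, s3.1, s3.2]

lemma vcv_stat_decay {L κ : ℝ} (P : VPar lam Astar L κ) {f : Circle1 → ℝ}
    {K : NNReal} (hf : LipschitzWith K f)
    {B : ℝ} (hB : ∀ c, |f c| ≤ B) {R : CM lam Astar} {ρh : Circle1 → ℝ} (hR : IsSRBDensity R ρh)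
    (k : ℕ) :
    |vcv (fun _ => R) ρh f 0 k| ≤ 2 * B * (2 * B + K) * (1 - κ) ^ k := by
  have hL := P.hL
  have t : Tendsto (fun M : ℕ => 6 * B * B * (1 - κ) ^ M + 2 * B * (2 * B + K) * (1 - κ) ^ k) atTop
      (𝓝 (6 * B * B * 0 + 2 * B * (2 * B + K) * (1 - κ) ^ k)) :=
    ((tendsto_pow_atTop_nhds_zero_of_lt_one (by linarith [P.hκ1]) (by linarith [P.hκ0])).const_mul _).add_const _
  rw [mul_zero, zero_add] at t
  refine ge_of_tendsto t (Eventually.of_forall fun M => ?_)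
  have s3 := vcv_step3 P R hR hf.continuous hB M k
  have d := vcv_decay P (fun _ => R) (vp_cone_const (m := 1) (by linarith) zero_le_one) (by simp) hf hB M k
  rw [abs_le] at *
  constructor <;> linarith [s3.1, s3.2, d.1, d.2]

lemma vcv_stat_shift {f : Circle1 → ℝ} (hf : Continuous f)
    {R : CM lam Astar} {ρh : Circle1 → ℝ} (hR : IsSRBDensity R ρh) (i k : ℕ) :
    vcv (fun _ => R) ρh f i (i + k) = vcv (fun _ => R) ρh f 0 k := by
  have hk : Continuous (fun c => f (mapIter (fun _ => R) k c)) :=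
    hf.comp (vp_mapIter_cont _ _)
  have a := vp_inv_iter R hR i (hf.mul hk)
  have b := vp_inv_iter R hR i hf
  have c := vp_inv_iter R hR i hk
  unfold vcv
  rw [vp_mapIter_add]
  simp only [Function.comp]
  rw [b]
  have c' : ∫ (x : Circle1), f (mapIter (fun m => R) k (mapIter (fun m => R) i x)) * ρh x = _ := c
  rw [c']
  exact congrArg (· - _) a

end PartF

section PartG

lemma vg_geom {θ : ℝ} (h0 : 0 ≤ θ) (h1 : θ < 1) (n : ℕ) :
    ∑ k ∈ Finset.range n, θ ^ k ≤ 1 / (1 - θ) := by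
  rw [geom_sum_eq h1.ne, ← neg_div_neg_eq, neg_sub, neg_sub]
  apply div_le_div_of_nonneg_right _ (by linarith)
  linarith [pow_nonneg h0 n]

lemma vg_sum_bd {θ C : ℝ} (h0 : 0 ≤ θ) (h1 : θ < 1) {u : ℕ → ℝ} (n : ℕ)
    (hu : ∀ k < n, |u k| ≤ C * θ ^ k) (hC : 0 ≤ C) :
    |∑ k ∈ Finset.range n, u k| ≤ C / (1 - θ) := by
  refine (Finset.abs_sum_le_sum_abs _ _).trans ?_
  refine (Finset.sum_le_sum fun k hk => hu k (Finset.mem_range.1 hk)).trans ?_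
  rw [← Finset.mul_sum]
  have := mul_le_mul_of_nonneg_left (vg_geom h0 h1 n) hC
  rwa [mul_one_div] at this

lemma vg_tail {θ C : ℝ} (h0 : 0 ≤ θ) (h1 : θ < 1) (hC : 0 ≤ C) {u : ℕ → ℝ}
    (hu : ∀ k, |u k| ≤ C * θ ^ k) (p q : ℕ) :
    |(∑ k ∈ Finset.range p, u k) - ∑ k ∈ Finset.range q, u k| ≤ C / (1 - θ) * (θ ^ p + θ ^ q) := by
  have hA : 0 ≤ C / (1 - θ) := div_nonneg hC (by linarith)
  have key : ∀ p r : ℕ, |(∑ k ∈ Finset.range (p + r), u k) - ∑ k ∈ Finset.range p, u k| ≤ C / (1 - θ) * θ ^ p := by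
    intro p r
    rw [Finset.sum_range_add, add_sub_cancel_left]
    have := vg_sum_bd h0 h1 (C := C * θ ^ p) (u := fun k => u (p + k)) r
      (fun k _ => by have := hu (p + k); rwa [pow_add, ← mul_assoc] at this) (by positivity)
    rwa [mul_div_right_comm] at this
  have hp := mul_nonneg hA (pow_nonneg h0 p)
  have hq := mul_nonneg hA (pow_nonneg h0 q)
  rw [mul_add]
  rcases le_total p q with h | h
  · obtain ⟨r, rfl⟩ := Nat.exists_eq_add_of_le h
    rw [abs_sub_comm]; linarith [key p r]
  · obtain ⟨r, rfl⟩ := Nat.exists_eq_add_of_le h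
    linarith [key q r]

/-- truncated variance sums -/
def vgV (c : ℕ → ℕ → ℝ) (K i : ℕ) : ℝ := c i i + 2 * ∑ k ∈ Finset.range K, c i (i + 1 + k)

lemma vg_sq (c : ℕ → ℕ → ℝ) (hs : ∀ i j, c i j = c j i) (n : ℕ) :
    ∑ i ∈ Finset.range n, ∑ j ∈ Finset.range n, c i j =
      ∑ i ∈ Finset.range n, (c i i + 2 * ∑ j ∈ Finset.Ico (i+1) n, c i j) := by
  induction n with
  | zero => simp
  | succ n ih =>
    rw [Finset.sum_range_succ, Finset.sum_range_succ (fun i => c i i + _)]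
    have e1 : ∑ i ∈ Finset.range n, ∑ j ∈ Finset.range (n+1), c i j =
        (∑ i ∈ Finset.range n, ∑ j ∈ Finset.range n, c i j) + ∑ i ∈ Finset.range n, c i n := by
      rw [← Finset.sum_add_distrib]
      exact Finset.sum_congr rfl fun i _ => Finset.sum_range_succ _ _
    have e2 : ∑ i ∈ Finset.range n, (c i i + 2 * ∑ j ∈ Finset.Ico (i+1) (n+1), c i j) =
        (∑ i ∈ Finset.range n, (c i i + 2 * ∑ j ∈ Finset.Ico (i+1) n, c i j)) +
          2 * ∑ i ∈ Finset.range n, c i n := by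
      rw [Finset.mul_sum, ← Finset.sum_add_distrib]
      refine Finset.sum_congr rfl fun i hi => ?_
      rw [Finset.sum_Ico_succ_top (by have := Finset.mem_range.1 hi; omega)]; ring
    rw [e1, e2, ih, Finset.sum_range_succ]
    simp only [Finset.Ico_self, Finset.sum_empty, mul_zero, add_zero]
    rw [Finset.sum_congr rfl fun i (_ : i ∈ Finset.range n) => hs n i]
    ring

lemma vg_quad {θ C : ℝ} (h0 : 0 ≤ θ) (h1 : θ < 1) (hC : 0 ≤ C) {c : ℕ → ℕ → ℝ}
    (hs : ∀ i j, c i j = c j i) (hc : ∀ i k, |c i (i + k)| ≤ C * θ ^ k) (n K : ℕ) :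
    |(∑ i ∈ Finset.range n, ∑ j ∈ Finset.range n, c i j) - ∑ i ∈ Finset.range n, vgV c K i| ≤
      2 * (C / (1 - θ)) * (n * θ ^ K + 1 / (1 - θ)) := by
  have hA : 0 ≤ C / (1 - θ) := div_nonneg hC (by linarith)
  rw [vg_sq c hs, ← Finset.sum_sub_distrib]
  refine (Finset.abs_sum_le_sum_abs _ _).trans ?_
  have hb : ∀ i ∈ Finset.range n, |c i i + 2 * ∑ j ∈ Finset.Ico (i+1) n, c i j - vgV c K i| ≤
      2 * (C / (1 - θ)) * (θ ^ K + θ ^ (n - 1 - i)) := by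
    intro i hi
    have hi' := Finset.mem_range.1 hi
    rw [Finset.sum_Ico_eq_sum_range]
    have := vg_tail h0 h1 hC (u := fun k => c i (i + 1 + k)) (fun k => by
      have h := hc i (1 + k)
      rw [← add_assoc] at h
      refine h.trans (mul_le_mul_of_nonneg_left ?_ hC)
      exact pow_le_pow_of_le_one h0 h1.le (by omega)) (n - (i + 1)) K
    unfold vgV
    have e : n - (i + 1) = n - 1 - i := by omega
    rw [e] at this ⊢
    rw [add_sub_add_left_eq_sub, ← mul_sub, abs_mul, abs_two]
    linarith
  refine (Finset.sum_le_sum hb).trans ?_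
  rw [← Finset.mul_sum, Finset.sum_add_distrib]
  refine mul_le_mul_of_nonneg_left ?_ (by linarith)
  rw [Finset.sum_range_reflect (fun k => θ ^ k) n]
  simp only [Finset.sum_const, Finset.card_range, nsmul_eq_mul]
  linarith [vg_geom h0 h1 n]

lemma vg_main {A : Type*} [CommRing A] [Algebra ℝ A] (E : A →ₗ[ℝ] ℝ) (X : ℕ → A)
    {θ C : ℝ} (h0 : 0 ≤ θ) (h1 : θ < 1) (hC : 0 ≤ C)
    (hc : ∀ i k, |E (X i * X (i + k))| ≤ C * θ ^ k) (a n K : ℕ) {α β : ℝ}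
    (hα0 : 0 ≤ α) (hα1 : α ≤ 1) (hβ0 : 0 ≤ β) (hβ1 : β ≤ 1) :
    |E (((∑ i ∈ Finset.range n, X (a + i)) + β • X (a + n) - α • X a) ^ 2) -
      ∑ i ∈ Finset.range n, vgV (fun i j => E (X i * X j)) K (a + i)| ≤
      2 * (C / (1 - θ)) * n * θ ^ K +
        (2 * (C / (1 - θ)) * (1 / (1 - θ)) + 4 * (C / (1 - θ)) + 4 * C) := by
  have hA : 0 ≤ C / (1 - θ) := div_nonneg hC (by linarith)
  set Pn := ∑ i ∈ Finset.range n, X (a + i) with hP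
  have ex : (Pn + β • X (a + n) - α • X a) ^ 2 = Pn * Pn + (2 * β) • (Pn * X (a + n)) -
      (2 * α) • (Pn * X a) + (β * β) • (X (a + n) * X (a + n)) + (α * α) • (X a * X a)
      - (2 * (α * β)) • (X a * X (a + n)) := by
    simp only [Algebra.smul_def, map_mul, map_ofNat]; ring
  have q := vg_quad h0 h1 hC (c := fun i j => E (X (a + i) * X (a + j)))
    (fun i j => by rw [mul_comm]) (fun i k => by have := hc (a + i) k; rwa [add_assoc] at this) n K
  have eq1 : E (Pn * Pn) = ∑ i ∈ Finset.range n, ∑ j ∈ Finset.range n, E (X (a + i) * X (a + j)) := by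
    rw [hP, Finset.sum_mul_sum, map_sum]; simp only [map_sum]
  have eV : ∀ i, vgV (fun i j => E (X (a + i) * X (a + j))) K i = vgV (fun i j => E (X i * X j)) K (a + i) := by
    intro i; unfold vgV; simp only [add_assoc]
  have b1 : |E (Pn * X (a + n))| ≤ C / (1 - θ) := by
    rw [hP, Finset.sum_mul, map_sum, ← Finset.sum_range_reflect]
    refine vg_sum_bd h0 h1 n (fun k hk => ?_) hC
    have := hc (a + (n - 1 - k)) (k + 1)
    rw [show a + (n - 1 - k) + (k + 1) = a + n by omega] at this
    refine this.trans (mul_le_mul_of_nonneg_left ?_ hC)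
    exact pow_le_pow_of_le_one h0 h1.le (by omega)
  have b2 : |E (Pn * X a)| ≤ C / (1 - θ) := by
    rw [hP, Finset.sum_mul, map_sum]
    refine vg_sum_bd h0 h1 n (fun k hk => ?_) hC
    rw [mul_comm]; exact hc a k
  have b3 : |E (X (a + n) * X (a + n))| ≤ C := by simpa using hc (a + n) 0
  have b4 : |E (X a * X a)| ≤ C := by simpa using hc a 0
  have b5 : |E (X a * X (a + n))| ≤ C := (hc a n).trans (by
    have := pow_le_one₀ h0 h1.le (n := n); nlinarith)
  have bd : ∀ {x y D : ℝ}, 0 ≤ x → x ≤ 1 → |y| ≤ D → |x * y| ≤ D := by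
    intro x y D hx0 hx1 hy
    rw [abs_mul, abs_of_nonneg hx0]
    have := abs_nonneg y
    nlinarith
  have c1 := abs_le.1 (bd hβ0 hβ1 b1)
  have c2 := abs_le.1 (bd hα0 hα1 b2)
  have c3 := abs_le.1 (bd (mul_nonneg hβ0 hβ0) (by nlinarith) b3)
  have c4 := abs_le.1 (bd (mul_nonneg hα0 hα0) (by nlinarith) b4)
  have c5 := abs_le.1 (bd (mul_nonneg hα0 hβ0) (by nlinarith) b5)
  rw [ex]
  simp only [map_add, map_sub, map_smul, smul_eq_mul, eq1]
  simp only [eV] at q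
  have q' := abs_le.1 q
  rw [abs_le]
  constructor <;> nlinarith [q'.1, q'.2, c1.1, c1.2, c2.1, c2.2, c3.1, c3.2, c4.1, c4.2, c5.1, c5.2]

/-- integration against a density -/
noncomputable def vgE (ρ : Circle1 → ℝ) (hρ : Integrable ρ (volume : Measure Circle1)) : C(Circle1, ℝ) →ₗ[ℝ] ℝ where
  toFun g := ∫ c : Circle1, g c * ρ c
  map_add' g h := by
    rw [← integral_add (vp_mul_int g.continuous hρ) (vp_mul_int h.continuous hρ)]
    congr 1; funext c; simp [add_mul]
  map_smul' r g := by
    simp only [ContinuousMap.smul_apply, smul_eq_mul, RingHom.id_apply, mul_assoc]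
    rw [integral_const_mul]

/-- centered observables -/
noncomputable def vgX {lam Astar : ℝ} (S : ℕ → CM lam Astar) (ρ f : Circle1 → ℝ) (hf : Continuous f) (i : ℕ) : C(Circle1, ℝ) :=
  ⟨fun c => f (mapIter S i c) - ∫ y : Circle1, f (mapIter S i y) * ρ y,
    (hf.comp (vp_mapIter_cont _ _)).sub continuous_const⟩

lemma vg_cov {lam Astar : ℝ} (S : ℕ → CM lam Astar) {ρ f : Circle1 → ℝ} (hf : Continuous f)
    (hρ : Integrable ρ (volume : Measure Circle1)) (hm : ∫ c : Circle1, ρ c = 1) (i j : ℕ) :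
    vgE ρ hρ (vgX S ρ f hf i * vgX S ρ f hf j) = vcv S ρ f i j := by
  have hi : Continuous (fun c => f (mapIter S i c)) := hf.comp (vp_mapIter_cont _ _)
  have hj : Continuous (fun c => f (mapIter S j c)) := hf.comp (vp_mapIter_cont _ _)
  set m₁ := ∫ y : Circle1, f (mapIter S i y) * ρ y with h1
  set m₂ := ∫ y : Circle1, f (mapIter S j y) * ρ y with h2
  have e : vgX S ρ f hf i * vgX S ρ f hf j = (⟨_, hi.mul hj⟩ : C(Circle1, ℝ)) - m₂ • ⟨_, hi⟩ - m₁ • ⟨_, hj⟩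
      + (m₁ * m₂) • 1 := by
    ext c
    simp [vgX, ← h1, ← h2]; ring
  rw [e]
  simp only [map_add, map_sub, map_smul, smul_eq_mul]
  have e1 : vgE ρ hρ 1 = 1 := by
    change ∫ c : Circle1, 1 * ρ c = 1
    simpa using hm
  have e2 : vgE ρ hρ ⟨_, hi⟩ = m₁ := rfl
  have e3 : vgE ρ hρ ⟨_, hj⟩ = m₂ := rfl
  rw [e1, e2, e3]
  unfold vcv
  rw [← h1, ← h2]
  have e4 : vgE ρ hρ ⟨_, hi.mul hj⟩ = ∫ c : Circle1, f (mapIter S i c) * f (mapIter S j c) * ρ c := rfl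
  rw [e4]; ring

end PartG

section PartH
variable {lam Astar : ℝ}

lemma vp_bdd_range {g : Circle1 → ℝ} (hg : Continuous g) : BddAbove (range g) :=
  (isCompact_range hg).bddAbove

lemma vp_dC1_dist (T₁ T₂ : CM lam Astar) (x : Circle1) :
    dist (T₁.toMap x) (T₂.toMap x) ≤ dC1 T₁ T₂ := by
  unfold dC1
  have h1 := le_ciSup (vp_bdd_range ((vp_toMap_cont T₁).dist (vp_toMap_cont T₂))) x
  have h2 : 0 ≤ ⨆ x : Circle1, |T₁.dmap x - T₂.dmap x| := Real.iSup_nonneg fun _ => abs_nonneg _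
  linarith

lemma vp_dC1_dmap (T₁ T₂ : CM lam Astar) (x : Circle1) :
    |T₁.dmap x - T₂.dmap x| ≤ dC1 T₁ T₂ := by
  unfold dC1
  have h1 := le_ciSup (vp_bdd_range ((vp_dmap_cont T₁).sub (vp_dmap_cont T₂)).abs) x
  simp only [Pi.sub_apply] at h1
  have h2 : 0 ≤ ⨆ x : Circle1, dist (T₁.toMap x) (T₂.toMap x) := Real.iSup_nonneg fun _ => dist_nonneg
  linarith

lemma vp_dist_rep (x : ℝ) (c : Circle1) : ∃ y : ℝ, c = (y : Circle1) ∧ dist (x : Circle1) c = |x - y| := by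
  obtain ⟨y₀, rfl⟩ := QuotientAddGroup.mk_surjective c
  refine ⟨y₀ + (round (x - y₀) : ℤ), (vp_coe_add_int _ _).symm, ?_⟩
  have h : dist (x : Circle1) (y₀ : Circle1) = |x - (y₀ + (round (x - y₀) : ℤ))| := by
    rw [dist_eq_norm, ← AddCircle.coe_sub, AddCircle.norm_eq]
    simp only [inv_one, one_mul, mul_one]
    congr 1; ring
  exact h

lemma vp_toMap_lip (T : CM lam Astar) (hlam : 1 < lam) {Λ : ℝ} (h : ∀ c, T.dmap c ≤ Λ) (x y : Circle1) :
    dist (T.toMap x) (T.toMap y) ≤ Λ * dist x y := by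
  obtain ⟨x, rfl⟩ := QuotientAddGroup.mk_surjective x
  obtain ⟨y, rfl, e⟩ := vp_dist_rep x y
  change dist (T.toMap (x : Circle1)) (T.toMap (y : Circle1)) ≤ Λ * dist (x : Circle1) (y : Circle1)
  rw [e, vp_toMap_coe, vp_toMap_coe]
  refine (vp_dist_le _ _).trans ?_
  have := Convex.norm_image_sub_le_of_norm_deriv_le (f := T.F) (s := univ) (C := Λ) (x := y) (y := x)
    (fun z _ => (vp_hasDeriv T z).differentiableAt) (fun z _ => by
      have h1 := h (z : Circle1)
      rw [vp_dmap_coe] at h1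
      rw [Real.norm_eq_abs, abs_of_nonneg (by linarith [T.expanding z])]; exact h1)
    convex_univ (mem_univ _) (mem_univ _)
  simpa [Real.norm_eq_abs] using this

lemma vp_unif_lip (hlam : 1 < lam) {η : ℝ} (hη : 0 < η) {γ : ℝ → CM lam Astar} (hγ : HolderCurve η γ) :
    ∃ Λ, 0 ≤ Λ ∧ ∀ s ∈ Icc (0:ℝ) 1, ∀ x y, dist ((γ s).toMap x) ((γ s).toMap y) ≤ Λ * dist x y := by
  obtain ⟨H, hH⟩ := hγ
  obtain ⟨D, hD0, hD⟩ := vp_cont_bdd (vp_dmap_cont (γ 0))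
  refine ⟨D + |H|, by positivity, fun s hs => vp_toMap_lip _ hlam fun c => ?_⟩
  have h1 := (vp_dC1_dmap (γ s) (γ 0) c).trans (hH s hs 0 ⟨le_rfl, zero_le_one⟩)
  rw [sub_zero, abs_of_nonneg hs.1] at h1
  have h2 : H * s ^ η ≤ |H| := by
    have a := Real.rpow_le_one hs.1 hs.2 hη.le
    have b := Real.rpow_nonneg hs.1 η
    have c := le_abs_self H
    nlinarith [abs_nonneg H]
  have h3 := le_abs_self ((γ s).dmap c - (γ 0).dmap c)
  have h4 := (le_abs_self _).trans (hD c)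
  linarith

lemma vp_small {η : ℝ} (hη : 0 < η) (H : ℝ) {δ : ℝ} (hδ : 0 < δ) :
    ∃ r > 0, ∀ u, 0 ≤ u → u ≤ r → |H| * u ^ η ≤ δ := by
  refine ⟨(δ / (|H| + 1)) ^ η⁻¹, by positivity, fun u hu hur => ?_⟩
  have h1 : u ^ η ≤ δ / (|H| + 1) := by
    have := Real.rpow_le_rpow hu hur hη.le
    rwa [← Real.rpow_mul (by positivity), inv_mul_cancel₀ hη.ne', Real.rpow_one] at this
  have h2 := mul_le_mul_of_nonneg_left h1 (abs_nonneg H)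
  refine h2.trans ?_
  rw [mul_div_assoc', div_le_iff₀ (by positivity)]
  nlinarith [abs_nonneg H]

lemma vp_gamma_cont {η : ℝ} (hη : 0 < η) {γ : ℝ → CM lam Astar} (hγ : HolderCurve η γ) {δ : ℝ} (hδ : 0 < δ) :
    ∃ r > 0, ∀ s ∈ Icc (0:ℝ) 1, ∀ t ∈ Icc (0:ℝ) 1, |s - t| ≤ r →
      ∀ x, dist ((γ s).toMap x) ((γ t).toMap x) ≤ δ := by
  obtain ⟨H, hH⟩ := hγ
  obtain ⟨r, hr, h⟩ := vp_small hη H hδ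
  refine ⟨r, hr, fun s hs t ht hst x => ?_⟩
  refine (vp_dC1_dist _ _ x).trans ((hH s hs t ht).trans ?_)
  refine le_trans ?_ (h _ (abs_nonneg _) hst)
  exact mul_le_mul_of_nonneg_right (le_abs_self H) (by positivity)

lemma vp_array_close {η : ℝ} (hη : 0 < η) {γ : ℝ → CM lam Astar} (hγ : HolderCurve η γ)
    {Tarr : ℕ → ℕ → CM lam Astar} (hT : ArrayApprox η γ Tarr) {δ : ℝ} (hδ : 0 < δ) (Q : ℕ) :
    ∃ N : ℕ, ∀ n, N ≤ n → 1 ≤ n → ∀ i m : ℕ, i ≤ n → m ≤ n → m ≤ i + Q → i ≤ m + Q →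
      ∀ x, dist ((Tarr n m).toMap x) ((γ (i / n)).toMap x) ≤ δ := by
  obtain ⟨r, hr, hc⟩ := vp_gamma_cont hη hγ (half_pos hδ)
  obtain ⟨M, hM⟩ := hT
  have t1 : Tendsto (fun n : ℕ => |M| * ((n:ℝ) ^ η)⁻¹) atTop (𝓝 (|M| * 0)) :=
    (((tendsto_rpow_atTop hη).comp tendsto_natCast_atTop_atTop).inv_tendsto_atTop).const_mul _
  rw [mul_zero] at t1
  have t2 : Tendsto (fun n : ℕ => (Q:ℝ) / n) atTop (𝓝 0) := tendsto_const_div_atTop_nhds_zero_nat _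
  obtain ⟨N, hN⟩ := ((t1.eventually (gt_mem_nhds (half_pos hδ))).and
    (t2.eventually (gt_mem_nhds hr))).exists_forall_of_atTop
  refine ⟨N, fun n hn hn1 i m hi hm h1 h2 x => ?_⟩
  obtain ⟨a1, a2⟩ := hN n hn
  have hn0 : (0:ℝ) < n := by exact_mod_cast hn1
  have hmem : ∀ k : ℕ, k ≤ n → (k:ℝ) / n ∈ Icc (0:ℝ) 1 := fun k hk =>
    ⟨by positivity, (div_le_one hn0).2 (by exact_mod_cast hk)⟩
  have e : (n:ℝ) * ((m:ℝ) / n) = m := by field_simp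
  have b1 := hM n hn1 _ (hmem m hm)
  rw [e, Nat.floor_natCast] at b1
  have hpos : (0:ℝ) < (n:ℝ) ^ η := by positivity
  have b2 : dC1 (Tarr n m) (γ (m / n)) ≤ |M| * ((n:ℝ) ^ η)⁻¹ := by
    rw [← div_eq_mul_inv, le_div_iff₀ hpos]
    linarith [le_abs_self M]
  have b3 := vp_dC1_dist (Tarr n m) (γ (m / n)) x
  have b4 := hc _ (hmem m hm) _ (hmem i hi) (by
    rw [← sub_div, abs_div, abs_of_pos hn0]
    refine le_trans ?_ a2.le
    refine div_le_div_of_nonneg_right ?_ hn0.le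
    rw [abs_le]
    have c1 : (m:ℝ) ≤ i + Q := by exact_mod_cast h1
    have c2 : (i:ℝ) ≤ m + Q := by exact_mod_cast h2
    constructor <;> linarith) x
  have := dist_triangle ((Tarr n m).toMap x) ((γ (m / n)).toMap x) ((γ (i / n)).toMap x)
  linarith

lemma vp_memD_cone {L : ℝ} {ρ : Circle1 → ℝ} (h : memD L ρ) : VCone L ρ := by
  obtain ⟨-, hpos, z, hz⟩ := h
  have ez : z = ((zrep z : ℝ) : Circle1) := AddCircle.coe_equivIco.symm
  have ac : ∀ x ∈ Ioo (zrep z) (zrep z + 1), arcCoord z (x : Circle1) = x := fun x hx =>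
    AddCircle.equivIoc_coe_of_mem (p := (1:ℝ)) ⟨hx.1, hx.2.le⟩
  have hne : ∀ x ∈ Ioo (zrep z) (zrep z + 1), (x : Circle1) ≠ z := by
    intro x hx h
    have e1 := ac x hx
    have e2 : arcCoord z ((zrep z + 1 : ℝ) : Circle1) = zrep z + 1 :=
      AddCircle.equivIoc_coe_of_mem (p := (1:ℝ)) ⟨by linarith, le_rfl⟩
    have e3 : ((zrep z + 1 : ℝ) : Circle1) = (x : Circle1) := by
      rw [h]
      have := vp_coe_add_int (zrep z) 1
      rw [Int.cast_one] at this
      rw [this, ← ez]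
    rw [e3, e1] at e2
    linarith [hx.2]
  refine ⟨zrep z, fun x _ => (hpos _).le, fun x hx y hy => ?_⟩
  have := hz _ _ (hne x hx) (hne y hy)
  unfold arcDist at this
  rw [ac x hx, ac y hy] at this
  have h2 := (le_abs_self _).trans this
  simp only [] at h2
  have h3 : Real.log (ρ x) ≤ L * |x - y| + Real.log (ρ y) := by linarith
  have h4 := Real.exp_le_exp.2 h3
  rwa [Real.exp_add, Real.exp_log (hpos _), Real.exp_log (hpos _)] at h4

lemma vp_arrIter (Tarr : ℕ → ℕ → CM lam Astar) (n k : ℕ) : arrIter Tarr n k = mapIter (Tarr n) k := by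
  induction k with
  | zero => rfl
  | succ k ih => change _ ∘ _ = _ ∘ _; rw [ih]

end PartH

section PartI
variable {lam Astar : ℝ}

/-- stationary truncated sums -/
def vst (d : ℕ → ℝ) (K : ℕ) : ℝ := d 0 + 2 * ∑ k ∈ Finset.range K, d (1 + k)

lemma vst_diff {d d' : ℕ → ℝ} {K : ℕ} {τ : ℝ} (h : ∀ k ≤ K, |d k - d' k| ≤ τ) :
    |vst d K - vst d' K| ≤ (1 + 2 * K) * τ := by
  unfold vst
  have h1 := abs_le.1 (h 0 (Nat.zero_le _))
  have h2 : |∑ k ∈ Finset.range K, (d (1 + k) - d' (1 + k))| ≤ K * τ := by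
    refine (Finset.abs_sum_le_sum_abs _ _).trans ?_
    refine (Finset.sum_le_sum fun k hk => h (1 + k) (by have := Finset.mem_range.1 hk; omega)).trans ?_
    simp
  rw [Finset.sum_sub_distrib] at h2
  have h2 := abs_le.1 h2
  rw [abs_le]
  constructor <;> nlinarith

lemma vst_vgV (c : ℕ → ℕ → ℝ) (K i : ℕ) : vgV c K i = vst (fun k => c i (i + k)) K := by
  unfold vgV vst
  simp only [add_assoc, add_zero]

lemma vst_bd {θ C : ℝ} (h0 : 0 ≤ θ) (h1 : θ < 1) (hC : 0 ≤ C) {d : ℕ → ℝ}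
    (hd : ∀ k, |d k| ≤ C * θ ^ k) (K : ℕ) : |vst d K| ≤ C + 2 * (C / (1 - θ)) := by
  unfold vst
  have a := abs_le.1 (hd 0)
  have b := abs_le.1 (vg_sum_bd h0 h1 (u := fun k => d (1 + k)) K (fun k _ => (hd (1+k)).trans
    (mul_le_mul_of_nonneg_left (pow_le_pow_of_le_one h0 h1.le (by omega)) hC)) hC)
  rw [pow_zero, mul_one] at a
  rw [abs_le]
  constructor <;> linarith [a.1, a.2, b.1, b.2]

lemma vp_pick {θ : ℝ} (h0 : 0 ≤ θ) (h1 : θ < 1) {Λ B : ℝ} (hΛ : 0 ≤ Λ) (hB : 0 ≤ B) (K : NNReal) (Kn : ℕ)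
    {τ : ℝ} (hτ : 0 < τ) : ∃ M : ℕ, ∃ δ > 0, ∀ k ≤ Kn,
      18 * B * B * θ ^ M + 4 * B * K * (δ * ∑ j ∈ Finset.range (M + k), Λ ^ j) ≤ τ := by
  have t : Tendsto (fun M : ℕ => 18 * B * B * θ ^ M) atTop (𝓝 (18 * B * B * 0)) :=
    (tendsto_pow_atTop_nhds_zero_of_lt_one h0 h1).const_mul _
  rw [mul_zero] at t
  obtain ⟨M, hM⟩ := (t.eventually (gt_mem_nhds (half_pos hτ))).exists
  set Z := 4 * B * K * ∑ j ∈ Finset.range (M + Kn), Λ ^ j with hZ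
  have hZ0 : 0 ≤ Z := by positivity
  refine ⟨M, τ / (2 * (Z + 1)), by positivity, fun k hk => ?_⟩
  have hsum : ∑ j ∈ Finset.range (M + k), Λ ^ j ≤ ∑ j ∈ Finset.range (M + Kn), Λ ^ j :=
    Finset.sum_le_sum_of_subset_of_nonneg (Finset.range_mono (by omega)) (fun _ _ _ => by positivity)
  have h2 : 4 * B * K * (τ / (2 * (Z + 1)) * ∑ j ∈ Finset.range (M + k), Λ ^ j) ≤
      4 * B * K * (τ / (2 * (Z + 1)) * ∑ j ∈ Finset.range (M + Kn), Λ ^ j) := by gcongr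
  have h3 : 4 * B * K * (τ / (2 * (Z + 1)) * ∑ j ∈ Finset.range (M + Kn), Λ ^ j) = Z * (τ / (2 * (Z + 1))) := by
    rw [hZ]; ring
  have h4 : Z * (τ / (2 * (Z + 1))) ≤ τ / 2 := by
    rw [mul_div_assoc', div_le_div_iff₀ (by positivity) (by norm_num)]; nlinarith
  linarith

lemma vp_sigma {L κ : ℝ} (P : VPar lam Astar L κ) {f : Circle1 → ℝ}
    {K : NNReal} (hf : LipschitzWith K f)
    {B : ℝ} (hB : ∀ c, |f c| ≤ B) {R : CM lam Astar} {ρh : Circle1 → ℝ} (hR : IsSRBDensity R ρh)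
    {σ : ℝ} (hσ : Tendsto (fun m : ℕ => ∫ x : Circle1,
          ((m : ℝ)⁻¹ * (∑ k ∈ Finset.range m,
            (f (R.toMap^[k] x) - ∫ y : Circle1, f y * ρh y)) ^ 2) * ρh x)
        atTop (𝓝 σ)) (Kn : ℕ) :
    |σ - vst (vcv (fun _ => R) ρh f 0) Kn| ≤
      2 * (2 * B * (2 * B + K) / (1 - (1 - κ))) * (1 - κ) ^ Kn := by
  have hB0 : 0 ≤ B := (abs_nonneg _).trans (hB 0)
  have hK := K.2
  set θ := 1 - κ with hθ
  have h0 : 0 ≤ θ := by linarith [P.hκ1]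
  have h1 : θ < 1 := by linarith [P.hκ0]
  set C := 2 * B * (2 * B + K) with hCdef
  have hC : 0 ≤ C := by positivity
  have hi := hR.1.1
  have hm := hR.1.2.1
  have key := fun n => vg_main (vgE ρh hi) (vgX (fun _ => R) ρh f hf.continuous) h0 h1 hC (fun i k => by
    rw [vg_cov _ _ hi hm, vcv_stat_shift hf.continuous hR]
    exact vcv_stat_decay P hf hB hR k) 0 n Kn (α := 0) (β := 0) le_rfl zero_le_one le_rfl zero_le_one
  set C2 := (2 * (C / (1 - θ)) * (1 / (1 - θ)) + 4 * (C / (1 - θ)) + 4 * C) with hC2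
  have t1 : Tendsto (fun n : ℕ => 2 * (C / (1 - θ)) * θ ^ Kn + C2 / n) atTop
      (𝓝 (2 * (C / (1 - θ)) * θ ^ Kn + 0)) := (tendsto_const_div_atTop_nhds_zero_nat _).const_add _
  rw [add_zero] at t1
  refine le_of_tendsto_of_tendsto ((hσ.sub_const _).abs) t1 ?_
  filter_upwards [eventually_ge_atTop 1] with n hn
  have hn0 : (0:ℝ) < n := by exact_mod_cast hn
  have k := key n
  simp only [zero_smul, add_zero, sub_zero, zero_add] at k
  have eV : ∀ i, vgV (fun i j => vgE ρh hi (vgX (fun _ => R) ρh f hf.continuous i * vgX (fun _ => R) ρh f hf.continuous j)) Kn i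
      = vst (vcv (fun _ => R) ρh f 0) Kn := by
    intro i
    rw [vst_vgV]
    congr 1
    funext k
    rw [vg_cov _ _ hi hm, vcv_stat_shift hf.continuous hR]
  simp only [eV, Finset.sum_const, Finset.card_range, nsmul_eq_mul] at k
  have eI : (∫ x : Circle1, ((n : ℝ)⁻¹ * (∑ k ∈ Finset.range n,
            (f (R.toMap^[k] x) - ∫ y : Circle1, f y * ρh y)) ^ 2) * ρh x) =
      (n:ℝ)⁻¹ * vgE ρh hi ((∑ i ∈ Finset.range n, vgX (fun _ => R) ρh f hf.continuous i) ^ 2) := by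
    rw [← smul_eq_mul, ← map_smul]
    change _ = ∫ c : Circle1, _ * ρh c
    congr 1
    funext c
    simp only [ContinuousMap.smul_apply, ContinuousMap.pow_apply, ContinuousMap.sum_apply, smul_eq_mul]
    congr 4
    funext i
    change _ = f (mapIter (fun _ => R) i c) - ∫ y : Circle1, f (mapIter (fun _ => R) i y) * ρh y
    rw [vp_inv_iter R hR i hf.continuous, vp_mapIter_const]
  rw [eI]
  set Z := vgE ρh hi ((∑ i ∈ Finset.range n, vgX (fun _ => R) ρh f hf.continuous i) ^ 2)
  set V := vst (vcv (fun _ => R) ρh f 0) Kn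
  have e : (n:ℝ)⁻¹ * Z - V = (Z - n * V) / n := by field_simp
  rw [e, abs_div, abs_of_pos hn0, div_le_iff₀ hn0]
  refine k.trans (le_of_eq ?_)
  field_simp

lemma vp_pow_small {θ : ℝ} (h0 : 0 ≤ θ) (h1 : θ < 1) (D : ℝ) {τ : ℝ} (hτ : 0 < τ) :
    ∃ Kn : ℕ, D * θ ^ Kn ≤ τ := by
  have t : Tendsto (fun M : ℕ => D * θ ^ M) atTop (𝓝 (D * 0)) :=
    (tendsto_pow_atTop_nhds_zero_of_lt_one h0 h1).const_mul _
  rw [mul_zero] at t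
  obtain ⟨M, hM⟩ := (t.eventually (gt_mem_nhds hτ)).exists
  exact ⟨M, hM.le⟩

lemma vp_sigma_cont {L κ : ℝ} (P : VPar lam Astar L κ) {f : Circle1 → ℝ}
    {K : NNReal} (hf : LipschitzWith K f)
    {B : ℝ} (hB : ∀ c, |f c| ≤ B) {η : ℝ} (hη : 0 < η) {γ : ℝ → CM lam Astar} (hγ : HolderCurve η γ)
    {ρhat : ℝ → Circle1 → ℝ} (hρhat : ∀ t ∈ Set.Icc (0 : ℝ) 1, IsSRBDensity (γ t) (ρhat t))
    {σ2 : ℝ → ℝ} {D : ℝ} 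
    (hσ : ∀ t ∈ Set.Icc (0 : ℝ) 1, ∀ Kn, |σ2 t - vst (vcv (fun _ => γ t) (ρhat t) f 0) Kn| ≤ D * (1 - κ) ^ Kn)
    {ε : ℝ} (hε : 0 < ε) :
    ∃ r > 0, ∀ s ∈ Icc (0:ℝ) 1, ∀ t ∈ Icc (0:ℝ) 1, |s - t| ≤ r → |σ2 s - σ2 t| ≤ ε := by
  have hL := P.hL
  have hB0 : 0 ≤ B := (abs_nonneg _).trans (hB 0)
  have h0 : 0 ≤ 1 - κ := by linarith [P.hκ1]
  have h1 : 1 - κ < 1 := by linarith [P.hκ0]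
  obtain ⟨Λ, hΛ, hΛL⟩ := vp_unif_lip P.hlam hη hγ
  obtain ⟨Kn, hKn⟩ := vp_pow_small h0 h1 D (τ := ε / 3) (by positivity)
  obtain ⟨M, δ, hδ, hM⟩ := vp_pick h0 h1 hΛ hB0 K Kn (τ := ε / 3 / (1 + 2 * Kn)) (by positivity)
  obtain ⟨r, hr, hrc⟩ := vp_gamma_cont hη hγ hδ
  refine ⟨r, hr, fun s hs t ht hst => ?_⟩
  have a1 := (hσ s hs Kn).trans hKn
  have a2 := (hσ t ht Kn).trans hKn
  have a3 : |vst (vcv (fun _ => γ s) (ρhat s) f 0) Kn - vst (vcv (fun _ => γ t) (ρhat t) f 0) Kn| ≤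
      (1 + 2 * Kn) * (ε / 3 / (1 + 2 * Kn)) := by
    refine vst_diff fun k hk => ?_
    have b1 := vcv_step3 P (γ s) (hρhat s hs) hf.continuous hB M k
    have b2 := vcv_close P (fun _ => γ s) (vp_cone_const (m := 1) (by linarith) zero_le_one) (by simp) hf hB
      (hρhat t ht) hΛ hδ.le (hΛL t ht) M M k le_rfl (fun _ _ _ => hrc s hs t ht hst)
    have b3 := hM k hk
    rw [abs_le] at *
    constructor <;> linarith [b1.1, b1.2, b2.1, b2.2]
  rw [mul_div_cancel₀ _ (by positivity)] at a3
  rw [abs_le] at *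
  constructor <;> linarith [a1.1, a1.2, a2.1, a2.2, a3.1, a3.2]

end PartI

section PartJ
variable {lam Astar : ℝ}

lemma vj_xi (Tarr : ℕ → ℕ → CM lam Astar) {f ρ : Circle1 → ℝ} (hf : Continuous f)
    (hρ : Integrable ρ (volume : Measure Circle1)) (n : ℕ) (x : Circle1) (t : ℝ) :
    xiD Tarr f ρ n x t = Real.sqrt n * (n:ℝ)⁻¹ * ((∑ k ∈ Finset.range ⌊(n : ℝ) * t⌋₊, vgX (Tarr n) ρ f hf k x) +
      Int.fract ((n : ℝ) * t) * vgX (Tarr n) ρ f hf ⌊(n : ℝ) * t⌋₊ x) := by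
  set F : ℕ → C(Circle1, ℝ) := fun k => ⟨fun c => f (mapIter (Tarr n) k c), hf.comp (vp_mapIter_cont _ _)⟩ with hF
  have eF : ∀ k c, fnk Tarr f n k c = F k c := fun k c => by
    unfold fnk; rw [vp_arrIter]; rfl
  set a := ⌊(n : ℝ) * t⌋₊
  set α := Int.fract ((n : ℝ) * t)
  have ez : ∀ c, zetaP Tarr f n c t = ((n:ℝ)⁻¹ • ((∑ k ∈ Finset.range a, F k) + α • F a)) c := by
    intro c
    unfold zetaP
    simp only [eF, ContinuousMap.smul_apply, ContinuousMap.add_apply, ContinuousMap.sum_apply, smul_eq_mul]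
    rfl
  have em : zetaMean Tarr f ρ n t = vgE ρ hρ ((n:ℝ)⁻¹ • ((∑ k ∈ Finset.range a, F k) + α • F a)) := by
    unfold zetaMean
    simp only [ez]
    rfl
  have ex : ∀ k, vgX (Tarr n) ρ f hf k x = F k x - vgE ρ hρ (F k) := fun k => rfl
  unfold xiD
  rw [em, ez]
  simp only [map_smul, map_add, map_sum, smul_eq_mul, ContinuousMap.smul_apply, ContinuousMap.add_apply,
    ContinuousMap.sum_apply, ex, Finset.sum_sub_distrib]
  ring

lemma vj_sq (Tarr : ℕ → ℕ → CM lam Astar) {f ρ : Circle1 → ℝ} (hf : Continuous f)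
    (hρ : Integrable ρ (volume : Measure Circle1)) (n : ℕ) (hn : 1 ≤ n) {s t : ℝ} {a m : ℕ}
    (ha : ⌊(n : ℝ) * s⌋₊ = a) (hb : ⌊(n : ℝ) * t⌋₊ = a + m) :
    ∫ x : Circle1, (xiD Tarr f ρ n x t - xiD Tarr f ρ n x s) ^ 2 * ρ x =
      (n:ℝ)⁻¹ * vgE ρ hρ (((∑ i ∈ Finset.range m, vgX (Tarr n) ρ f hf (a + i)) +
        Int.fract ((n : ℝ) * t) • vgX (Tarr n) ρ f hf (a + m) -
        Int.fract ((n : ℝ) * s) • vgX (Tarr n) ρ f hf a) ^ 2) := by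
  rw [← smul_eq_mul, ← map_smul]
  change _ = ∫ c : Circle1, _ * ρ c
  congr 1
  funext x
  congr 1
  rw [vj_xi Tarr hf hρ, vj_xi Tarr hf hρ, ha, hb, Finset.sum_range_add]
  simp only [ContinuousMap.smul_apply, ContinuousMap.pow_apply, ContinuousMap.sub_apply,
    ContinuousMap.add_apply, ContinuousMap.sum_apply, smul_eq_mul]
  have hn0 : (0:ℝ) < n := by exact_mod_cast hn
  have e : (n:ℝ)⁻¹ = (Real.sqrt n * (n:ℝ)⁻¹) ^ 2 := by
    rw [mul_pow, Real.sq_sqrt hn0.le]; field_simp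
  conv_rhs => rw [e]
  rw [← mul_pow, ← mul_sub]
  ring

/-- Riemann sums -/
lemma vj_riemann {σ2 : ℝ → ℝ} (hc : ContinuousOn σ2 (Icc 0 1)) {r ε D : ℝ}
    (hr : ∀ s ∈ Icc (0:ℝ) 1, ∀ t ∈ Icc (0:ℝ) 1, |s - t| ≤ r → |σ2 s - σ2 t| ≤ ε)
    (hD : ∀ s ∈ Icc (0:ℝ) 1, |σ2 s| ≤ D) {n : ℕ} (hn : 1 ≤ n) (hnr : (n:ℝ)⁻¹ ≤ r)
    {t h : ℝ} (ht : 0 ≤ t) (hh : 0 ≤ h) (hth : t + h ≤ 1) {a m : ℕ}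
    (ha : ⌊(n : ℝ) * t⌋₊ = a) (hb : ⌊(n : ℝ) * (t + h)⌋₊ = a + m) :
    |(n:ℝ)⁻¹ * (∑ i ∈ Finset.range m, σ2 ((a + i : ℕ) / n)) - ∫ s in t..(t + h), σ2 s| ≤
      (n:ℝ)⁻¹ * (m * ε + 2 * D) := by
  have hn0 : (0:ℝ) < n := by exact_mod_cast hn
  have hI : ∀ x ∈ Icc (0:ℝ) 1, ∀ y ∈ Icc (0:ℝ) 1, IntervalIntegrable σ2 volume x y := fun x hx y hy =>
    (hc.mono (uIcc_subset_Icc hx hy)).intervalIntegrable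
  have fl1 := Nat.floor_le (a := (n:ℝ) * t) (by positivity)
  have fl2 := Nat.lt_floor_add_one ((n:ℝ) * t)
  have fl3 := Nat.floor_le (a := (n:ℝ) * (t + h)) (by positivity)
  have fl4 := Nat.lt_floor_add_one ((n:ℝ) * (t + h))
  rw [ha] at fl1 fl2
  rw [hb] at fl3 fl4
  have hbn : a + m ≤ n := by
    have : ((a + m : ℕ) : ℝ) ≤ n := by nlinarith
    exact_mod_cast this
  have hmem : ∀ k : ℕ, k ≤ n → (k:ℝ) / n ∈ Icc (0:ℝ) 1 := fun k hk =>
    ⟨by positivity, (div_le_one hn0).2 (by exact_mod_cast hk)⟩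
  have htm : t ∈ Icc (0:ℝ) 1 := ⟨ht, by linarith⟩
  have hthm : t + h ∈ Icc (0:ℝ) 1 := ⟨by linarith, hth⟩
  have e1 : ∑ i ∈ Finset.range m, ∫ s in ((a + i : ℕ) / n : ℝ)..((a + (i + 1) : ℕ) / n : ℝ), σ2 s =
      ∫ s in ((a + 0 : ℕ) / n : ℝ)..((a + m : ℕ) / n : ℝ), σ2 s :=
    intervalIntegral.sum_integral_adjacent_intervals (a := fun i : ℕ => ((a + i : ℕ) / n : ℝ))
      (fun k hk => hI _ (hmem _ (by omega)) _ (hmem _ (by omega)))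
  rw [add_zero] at e1
  have b1 : ∀ i ∈ Finset.range m, |(n:ℝ)⁻¹ * σ2 ((a + i : ℕ) / n) -
      ∫ s in ((a + i : ℕ) / n : ℝ)..((a + (i + 1) : ℕ) / n : ℝ), σ2 s| ≤ ε * (n:ℝ)⁻¹ := by
    intro i hi
    have hi' := Finset.mem_range.1 hi
    set p : ℝ := ((a + i : ℕ) / n : ℝ) with hp
    set q : ℝ := ((a + (i + 1) : ℕ) / n : ℝ) with hq
    have hpq : q - p = (n:ℝ)⁻¹ := by rw [hp, hq]; push_cast; field_simp; ring
    have hpm : p ∈ Icc (0:ℝ) 1 := hmem _ (by omega)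
    have hqm : q ∈ Icc (0:ℝ) 1 := hmem _ (by omega)
    have hinv : 0 ≤ (n:ℝ)⁻¹ := by positivity
    have e2 : (n:ℝ)⁻¹ * σ2 p - ∫ s in p..q, σ2 s = ∫ s in p..q, (σ2 p - σ2 s) := by
      rw [intervalIntegral.integral_sub intervalIntegrable_const (hI _ hpm _ hqm)]
      rw [intervalIntegral.integral_const, hpq, smul_eq_mul]
    rw [e2, ← Real.norm_eq_abs]
    have := intervalIntegral.norm_integral_le_of_norm_le_const (a := p) (b := q) (C := ε)
      (f := fun s => σ2 p - σ2 s) (fun s hs => by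
        rw [uIoc_of_le (by linarith)] at hs
        rw [Real.norm_eq_abs]
        refine hr p hpm s ⟨by linarith [hpm.1, hs.1], by linarith [hqm.2, hs.2]⟩ ?_
        rw [abs_sub_comm, abs_of_nonneg (by linarith [hs.1])]
        linarith [hs.2])
    rwa [hpq, abs_of_nonneg hinv] at this
  have b2 : |(n:ℝ)⁻¹ * (∑ i ∈ Finset.range m, σ2 ((a + i : ℕ) / n)) -
      ∫ s in ((a : ℕ) / n : ℝ)..((a + m : ℕ) / n : ℝ), σ2 s| ≤ m * (ε * (n:ℝ)⁻¹) := by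
    rw [← e1, Finset.mul_sum, ← Finset.sum_sub_distrib]
    refine (Finset.abs_sum_le_sum_abs _ _).trans ((Finset.sum_le_sum b1).trans ?_)
    simp
  have am := hmem a (by omega)
  have bm := hmem (a + m) hbn
  have bnd : ∀ p ∈ Icc (0:ℝ) 1, ∀ q ∈ Icc (0:ℝ) 1, p ≤ q → q - p ≤ (n:ℝ)⁻¹ → |∫ s in p..q, σ2 s| ≤ D * (n:ℝ)⁻¹ := by
    intro p hp q hq hpq hle
    have hD0 : 0 ≤ D := (abs_nonneg _).trans (hD p hp)
    have := intervalIntegral.norm_integral_le_of_norm_le_const (a := p) (b := q) (C := D)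
      (f := σ2) (fun s hs => by
        rw [uIoc_of_le hpq] at hs
        exact hD s ⟨by linarith [hp.1, hs.1], by linarith [hq.2, hs.2]⟩)
    rw [abs_of_nonneg (by linarith), Real.norm_eq_abs] at this
    exact this.trans (mul_le_mul_of_nonneg_left hle hD0)
  have b3 := bnd _ am t htm ((div_le_iff₀ hn0).2 (by linarith)) (by
    have : t ≤ (a + 1 : ℝ) / n := (le_div_iff₀ hn0).2 (by linarith)
    rw [add_div, one_div] at this; linarith)
  have b4 := bnd _ bm (t + h) hthm ((div_le_iff₀ hn0).2 (by linarith)) (by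
    have : t + h ≤ (((a + m : ℕ) : ℝ) + 1 : ℝ) / n := (le_div_iff₀ hn0).2 (by linarith)
    rw [add_div, one_div] at this; linarith)
  have e3 := intervalIntegral.integral_add_adjacent_intervals (hI _ am t htm) (hI t htm _ hthm)
  have e4 := intervalIntegral.integral_add_adjacent_intervals (hI _ am _ bm) (hI _ bm _ hthm)
  rw [abs_le] at b2 b3 b4 ⊢
  constructor <;> nlinarith [b2.1, b2.2, b3.1, b3.2, b4.1, b4.2]

lemma vj_except {u : ℕ → ℝ} {ε D : ℝ} (hε : 0 ≤ ε) (hD : 0 ≤ D) {M K n a m : ℕ} (ham : a + m ≤ n)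
    (h1 : ∀ j, j ≤ n → |u j| ≤ D) (h2 : ∀ j, M ≤ j → j + K ≤ n → |u j| ≤ ε) :
    |∑ i ∈ Finset.range m, u (a + i)| ≤ m * ε + D * (M + K) := by
  refine (Finset.abs_sum_le_sum_abs _ _).trans ?_
  have e := Finset.sum_Ico_eq_sum_range (fun j => |u j|) a (a + m)
  rw [Nat.add_sub_cancel_left] at e
  rw [← e]
  set bad := Finset.range M ∪ Finset.Ico (n - K) n with hbad
  have h : ∀ j ∈ Finset.Ico a (a + m), |u j| ≤ ε + (if j ∈ bad then D else 0) := by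
    intro j hj
    have hj' := Finset.mem_Ico.1 hj
    by_cases hb : j ∈ bad
    · rw [if_pos hb]; linarith [h1 j (by omega)]
    · rw [if_neg hb, add_zero]
      simp only [hbad, Finset.mem_union, Finset.mem_range, Finset.mem_Ico, not_or, not_and, not_lt] at hb
      exact h2 j hb.1 (by by_contra hh; have := hb.2 (by omega); omega)
  refine (Finset.sum_le_sum h).trans ?_
  rw [Finset.sum_add_distrib, Finset.sum_ite_mem]
  simp only [Finset.sum_const, Nat.card_Ico, Nat.add_sub_cancel_left, nsmul_eq_mul]
  have c1 : (Finset.Ico a (a + m) ∩ bad).card ≤ M + K := by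
    refine (Finset.card_le_card Finset.inter_subset_right).trans ((Finset.card_union_le _ _).trans ?_)
    simp; omega
  have c2 : ((Finset.Ico a (a + m) ∩ bad).card : ℝ) ≤ M + K := by exact_mod_cast c1
  nlinarith

end PartJ

section PartK
variable {lam Astar : ℝ}

lemma vk_core {L κ : ℝ} (P : VPar lam Astar L κ) (Tarr : ℕ → ℕ → CM lam Astar) {f ρ : Circle1 → ℝ}
    {K : NNReal} (hf : LipschitzWith K f) {B : ℝ} (hB : ∀ c, |f c| ≤ B)
    (hρ : VCone (L - 1) ρ) (hm : ∫ c : Circle1, ρ c = 1) {n : ℕ} (hn : 1 ≤ n) {s t : ℝ} {a m : ℕ}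
    (ha : ⌊(n : ℝ) * s⌋₊ = a) (hb : ⌊(n : ℝ) * t⌋₊ = a + m) {C θ : ℝ}
    (hCd : C = 2 * B * (2 * B + K)) (hθ : θ = 1 - κ) (Kn : ℕ) :
    |(∫ x : Circle1, (xiD Tarr f ρ n x t - xiD Tarr f ρ n x s) ^ 2 * ρ x) -
      (n:ℝ)⁻¹ * ∑ i ∈ Finset.range m, vgV (vcv (Tarr n) ρ f) Kn (a + i)| ≤
    (n:ℝ)⁻¹ * (2 * (C / (1 - θ)) * m * θ ^ Kn +
        (2 * (C / (1 - θ)) * (1 / (1 - θ)) + 4 * (C / (1 - θ)) + 4 * C)) := by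
  have hB0 : 0 ≤ B := (abs_nonneg _).trans (hB 0)
  have hK := K.2
  have h0 : 0 ≤ θ := by linarith [P.hκ1]
  have h1 : θ < 1 := by linarith [P.hκ0]
  have hC : 0 ≤ C := by rw [hCd]; positivity
  have hL := P.hL
  have hi := vp_cone_int (by linarith) hρ
  have key := vg_main (vgE ρ hi) (vgX (Tarr n) ρ f hf.continuous) h0 h1 hC (fun i k => by
    rw [vg_cov _ _ hi hm, hCd, hθ]
    exact vcv_decay P (Tarr n) hρ hm hf hB i k) a m Kn
    (Int.fract_nonneg ((n:ℝ) * s)) (Int.fract_lt_one _).le (Int.fract_nonneg ((n:ℝ) * t)) (Int.fract_lt_one _).le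
  rw [vj_sq Tarr hf.continuous hi n hn ha hb, ← mul_sub, abs_mul, abs_of_nonneg (by positivity)]
  simp only [vg_cov _ _ hi hm] at key
  exact mul_le_mul_of_nonneg_left key (by positivity)

lemma vk_bd {L κ : ℝ} (P : VPar lam Astar L κ) (S : ℕ → CM lam Astar) {f ρ : Circle1 → ℝ}
    {K : NNReal} (hf : LipschitzWith K f) {B : ℝ} (hB : ∀ c, |f c| ≤ B)
    (hρ : VCone (L - 1) ρ) (hm : ∫ c : Circle1, ρ c = 1)  {C θ : ℝ}
    (hCd : C = 2 * B * (2 * B + K)) (hθ : θ = 1 - κ) (Kn i : ℕ) :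
    |vgV (vcv S ρ f) Kn i| ≤ C + 2 * (C / (1 - θ)) := by
  have hB0 : 0 ≤ B := (abs_nonneg _).trans (hB 0)
  have hK := K.2
  have hC : 0 ≤ C := by rw [hCd]; positivity
  rw [vst_vgV]
  exact vst_bd (by linarith [P.hκ1]) (by linarith [P.hκ0]) hC (fun k => by
    rw [hCd, hθ]; exact vcv_decay P S hρ hm hf hB i k) Kn

end PartK

/-- Lemma `lem:variance`.  For `ρ ∈ 𝒟_L`:
(1) the second moments `μ[(ξₙ(t) − ξₙ(s))²]` are bounded uniformly over `t, s ∈ [0,1]` and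
`n ≥ 1`, with a bound depending on `ρ` only through `L`;
(2) `μ[(ξₙ(t+h) − ξₙ(t))²] = ∫ₜ^{t+h} σ̂ₛ²(f) ds + o(n^{−1/2}) + h·o(1)` uniformly;
(3) `∫ₜ^{t+h} σ̂ₛ²(f) ds = h·σ̂ₜ²(f) + o(h)` as `h → 0`, uniformly in `t`. -/
theorem statement12 {lam Astar : ℝ} (hlam : 1 < lam) (hA : 0 < Astar)
    {η : ℝ} (hη : η ∈ Set.Ioo (0 : ℝ) 1)
    (γ : ℝ → CM lam Astar) (hγ : HolderCurve η γ)
    (Tarr : ℕ → ℕ → CM lam Astar) (hT : ArrayApprox η γ Tarr)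
    (f : Circle1 → ℝ) (hf : ∃ K : NNReal, LipschitzWith K f)
    (ρhat : ℝ → Circle1 → ℝ) (hρhat : ∀ t ∈ Set.Icc (0 : ℝ) 1, IsSRBDensity (γ t) (ρhat t))
    (σ2 : ℝ → ℝ)
    (hσ2 : ∀ t ∈ Set.Icc (0 : ℝ) 1,
      Tendsto (fun m : ℕ => ∫ x : Circle1,
          ((m : ℝ)⁻¹ * (∑ k ∈ Finset.range m,
            (f ((γ t).toMap^[k] x) - ∫ y : Circle1, f y * ρhat t y)) ^ 2) * ρhat t x)
        atTop (𝓝 (σ2 t)))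
    (L : ℝ) (hL : 0 < L) :
    (∃ B : ℝ, ∀ ρ : Circle1 → ℝ, memD L ρ → ∀ n : ℕ, 1 ≤ n →
      ∀ t ∈ Set.Icc (0 : ℝ) 1, ∀ s ∈ Set.Icc (0 : ℝ) 1,
        (∫ x : Circle1, (xiD Tarr f ρ n x t - xiD Tarr f ρ n x s) ^ 2 * ρ x) ≤ B) ∧
    (∀ ε : ℝ, 0 < ε → ∃ N : ℕ, ∀ ρ : Circle1 → ℝ, memD L ρ → ∀ n : ℕ, N ≤ n → 1 ≤ n →
      ∀ t h : ℝ, 0 ≤ t → 0 ≤ h → t + h ≤ 1 →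
        |(∫ x : Circle1, (xiD Tarr f ρ n x (t + h) - xiD Tarr f ρ n x t) ^ 2 * ρ x) -
            ∫ s in t..(t + h), σ2 s| ≤ ε * ((Real.sqrt n)⁻¹ + h)) ∧
    (∀ ε : ℝ, 0 < ε → ∃ δ : ℝ, 0 < δ ∧ ∀ t h : ℝ, 0 ≤ t → 0 < h → h ≤ δ → t + h ≤ 1 →
      |(∫ s in t..(t + h), σ2 s) - h * σ2 t| ≤ ε * h) := by
  obtain ⟨K, hf⟩ := hf
  obtain ⟨B, hB0, hB⟩ := vp_cont_bdd hf.continuous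
  obtain ⟨L', κ, P, hLL⟩ := vp_par hlam hA L
  have hK := K.2
  have hL' := P.hL
  obtain ⟨C, hCd⟩ : ∃ C : ℝ, C = 2 * B * (2 * B + K) := ⟨_, rfl⟩
  obtain ⟨θ, hθ⟩ : ∃ θ : ℝ, θ = 1 - κ := ⟨_, rfl⟩
  have h0 : 0 ≤ θ := by linarith [P.hκ1]
  have h1 : θ < 1 := by linarith [P.hκ0]
  have hC : 0 ≤ C := by rw [hCd]; positivity
  obtain ⟨A, hAd⟩ : ∃ A : ℝ, A = C / (1 - θ) := ⟨_, rfl⟩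
  have hA0 : 0 ≤ A := by rw [hAd]; exact div_nonneg hC (by linarith)
  obtain ⟨C2, hC2⟩ : ∃ C2 : ℝ, C2 = 2 * A * (1 / (1 - θ)) + 4 * A + 4 * C := ⟨_, rfl⟩
  have hC20 : 0 ≤ C2 := by
    have : 0 ≤ 1 / (1 - θ) := div_nonneg zero_le_one (by linarith)
    rw [hC2]; positivity
  have cone : ∀ ρ, memD L ρ → VCone (L' - 1) ρ := fun ρ h => vp_cone_mono hLL (vp_memD_cone h)
  have core : ∀ ρ, memD L ρ → ∀ n : ℕ, 1 ≤ n → ∀ s t : ℝ, ∀ a m : ℕ, ⌊(n : ℝ) * s⌋₊ = a →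
      ⌊(n : ℝ) * t⌋₊ = a + m → ∀ Kn,
      |(∫ x : Circle1, (xiD Tarr f ρ n x t - xiD Tarr f ρ n x s) ^ 2 * ρ x) -
      (n:ℝ)⁻¹ * ∑ i ∈ Finset.range m, vgV (vcv (Tarr n) ρ f) Kn (a + i)| ≤
      (n:ℝ)⁻¹ * (2 * A * m * θ ^ Kn + C2) := by
    intro ρ hρ n hn s t a m ha hb Kn
    have := vk_core P Tarr hf hB (cone ρ hρ) hρ.1.2.1 hn ha hb hCd hθ Kn
    rw [← hAd, ← hC2] at this
    exact this
  have vbd : ∀ ρ, memD L ρ → ∀ n Kn i, |vgV (vcv (Tarr n) ρ f) Kn i| ≤ C + 2 * A := by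
    intro ρ hρ n Kn i
    rw [hAd]
    exact vk_bd P (Tarr n) hf hB (cone ρ hρ) hρ.1.2.1 hCd hθ Kn i
  have floors : ∀ n : ℕ, 1 ≤ n → ∀ s t : ℝ, 0 ≤ s → s ≤ t → t ≤ 1 → ∃ a m : ℕ, ⌊(n : ℝ) * s⌋₊ = a ∧
      ⌊(n : ℝ) * t⌋₊ = a + m ∧ a + m ≤ n ∧ (m:ℝ) ≤ n * (t - s) + 1 := by
    intro n hn s t hs hst ht
    have hn0 : (0:ℝ) < n := by exact_mod_cast hn
    have hle : ⌊(n : ℝ) * s⌋₊ ≤ ⌊(n : ℝ) * t⌋₊ := Nat.floor_mono (by gcongr)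
    have fl2 := Nat.lt_floor_add_one ((n:ℝ) * s)
    have fl3 := Nat.floor_le (a := (n:ℝ) * t) (by have := hs.trans hst; positivity)
    refine ⟨_, ⌊(n : ℝ) * t⌋₊ - ⌊(n : ℝ) * s⌋₊, rfl, by omega, ?_, ?_⟩
    · have : (⌊(n : ℝ) * t⌋₊ : ℝ) ≤ n := by nlinarith
      have : ⌊(n : ℝ) * t⌋₊ ≤ n := by exact_mod_cast this
      omega
    · rw [Nat.cast_sub hle]; linarith
  have sig : ∀ t ∈ Set.Icc (0 : ℝ) 1, ∀ Kn, |σ2 t - vst (vcv (fun _ => γ t) (ρhat t) f 0) Kn| ≤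
      (2 * A) * (1 - κ) ^ Kn := by
    intro t ht Kn
    have := vp_sigma P hf hB (hρhat t ht) (hσ2 t ht) Kn
    rwa [← hCd, ← hθ, ← hAd, hθ] at this
  have sigc := fun {ε : ℝ} (hε : 0 < ε) => vp_sigma_cont P hf hB hη.1 hγ hρhat sig hε
  have sigb : ∀ s ∈ Icc (0:ℝ) 1, |σ2 s| ≤ C + 2 * A := by
    intro s hs
    have a1 := abs_le.1 (sig s hs 0)
    have a2 := vcv_stat_decay P hf hB (hρhat s hs) 0
    rw [← hCd, pow_zero, mul_one] at a2
    have a2 := abs_le.1 a2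
    simp only [vst, Finset.range_zero, Finset.sum_empty, mul_zero, add_zero, pow_zero, mul_one] at a1
    rw [abs_le]
    constructor <;> linarith [a1.1, a1.2, a2.1, a2.2]
  have sigC : ContinuousOn σ2 (Icc 0 1) := by
    rw [Metric.continuousOn_iff]
    intro b hb ε hε
    obtain ⟨r, hr, h⟩ := sigc (half_pos hε)
    refine ⟨r, hr, fun a ha hab => ?_⟩
    rw [Real.dist_eq] at hab ⊢
    linarith [h a ha b hb hab.le]
  refine ⟨?_, ?_, ?_⟩
  · refine ⟨C + 4 * A + C2, fun ρ hρ n hn => ?_⟩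
    have hn0 : (0:ℝ) < n := by exact_mod_cast hn
    have main : ∀ t ∈ Icc (0:ℝ) 1, ∀ s ∈ Icc (0:ℝ) 1, s ≤ t →
        (∫ x : Circle1, (xiD Tarr f ρ n x t - xiD Tarr f ρ n x s) ^ 2 * ρ x) ≤ C + 4 * A + C2 := by
      intro t ht s hs hst
      obtain ⟨a, m, ha, hb, hab, -⟩ := floors n hn s t hs.1 hst ht.2
      have k := (abs_le.1 (core ρ hρ n hn s t a m ha hb 0)).2
      have hsum : ∑ i ∈ Finset.range m, vgV (vcv (Tarr n) ρ f) 0 (a + i) ≤ m * (C + 2 * A) := by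
        refine (Finset.sum_le_sum fun i _ => (le_abs_self _).trans (vbd ρ hρ n 0 (a + i))).trans ?_
        simp only [Finset.sum_const, Finset.card_range, nsmul_eq_mul]; exact le_rfl
      rw [pow_zero, mul_one] at k
      have hmn : (m:ℝ) ≤ n := by exact_mod_cast (by omega : m ≤ n)
      have hn1 : (1:ℝ) ≤ n := by exact_mod_cast hn
      have k2 : (∫ x : Circle1, (xiD Tarr f ρ n x t - xiD Tarr f ρ n x s) ^ 2 * ρ x) ≤
          (n:ℝ)⁻¹ * (m * (C + 2 * A) + (2 * A * m + C2)) := by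
        have := mul_le_mul_of_nonneg_left hsum (inv_nonneg.2 hn0.le)
        rw [mul_add (n:ℝ)⁻¹]; linarith
      refine k2.trans ?_
      rw [inv_mul_le_iff₀ hn0]
      nlinarith
    intro t ht s hs
    rcases le_total s t with h | h
    · exact main t ht s hs h
    · have := main s hs t ht h
      refine le_trans (le_of_eq ?_) this
      congr 1; funext x; ring
  · intro ε hε
    obtain ⟨e1, he1⟩ : ∃ e1 : ℝ, e1 = ε / 4 := ⟨_, rfl⟩
    have he0 : 0 < e1 := by rw [he1]; positivity
    obtain ⟨Λ, hΛ, hΛL⟩ := vp_unif_lip hlam hη.1 hγ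
    obtain ⟨Kn, hKn⟩ := vp_pow_small h0 h1 (2 * A) (τ := e1) he0
    obtain ⟨M, δ, hδ, hM⟩ := vp_pick h0 h1 hΛ hB0 K Kn (τ := e1 / (1 + 2 * Kn)) (by positivity)
    obtain ⟨N₁, hN₁⟩ := vp_array_close hη.1 hγ hT hδ (M + Kn)
    obtain ⟨r, hr, hrc⟩ := sigc he0
    obtain ⟨C3, hC3⟩ : ∃ C3 : ℝ, C3 = C2 + (2 * (C + 2 * A)) * (M + Kn) + 2 * (C + 2 * A) + ε := ⟨_, rfl⟩
    have t1 : Tendsto (fun n : ℕ => (n:ℝ)⁻¹) atTop (𝓝 0) := tendsto_inv_atTop_nhds_zero_nat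
    have t2 : Tendsto (fun n : ℕ => Real.sqrt n) atTop atTop :=
      Real.tendsto_sqrt_atTop.comp tendsto_natCast_atTop_atTop
    obtain ⟨N₂, hN₂⟩ := ((t1.eventually (gt_mem_nhds hr)).and
      (t2.eventually_ge_atTop (C3 / ε))).exists_forall_of_atTop
    refine ⟨max N₁ N₂, fun ρ hρ n hn hn1 t h ht hh hth => ?_⟩
    obtain ⟨hnr, hsq⟩ := hN₂ n ((le_max_right _ _).trans hn)
    have hclose := hN₁ n ((le_max_left _ _).trans hn) hn1
    have hn0 : (0:ℝ) < n := by exact_mod_cast hn1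
    obtain ⟨a, m, ha, hb, hab, hmh⟩ := floors n hn1 t (t + h) ht (by linarith) hth
    have k := core ρ hρ n hn1 t (t + h) a m ha hb Kn
    have rie := vj_riemann sigC hrc sigb hn1 hnr.le ht hh hth ha hb
    have hmem : ∀ k : ℕ, k ≤ n → (k:ℝ) / n ∈ Icc (0:ℝ) 1 := fun k hk =>
      ⟨by positivity, (div_le_one hn0).2 (by exact_mod_cast hk)⟩
    have exc := vj_except (u := fun j => vgV (vcv (Tarr n) ρ f) Kn j - σ2 ((j:ℕ) / n)) (ε := 2 * e1)
      (D := 2 * (C + 2 * A)) (by positivity) (by positivity) (M := M) (K := Kn) hab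
      (fun j hj => by
        have x1 := abs_le.1 (vbd ρ hρ n Kn j)
        have x2 := abs_le.1 (sigb _ (hmem j hj))
        rw [abs_le]
        constructor <;> linarith [x1.1, x1.2, x2.1, x2.2])
      (fun j hj1 hj2 => by
        have hj := hmem j (by omega)
        have x1 := (sig _ hj Kn)
        rw [← hθ] at x1
        have x1 := x1.trans hKn
        have x2 : |vst (fun k => vcv (Tarr n) ρ f j (j + k)) Kn - vst (vcv (fun _ => γ (j / n)) (ρhat (j / n)) f 0) Kn| ≤
            (1 + 2 * Kn) * (e1 / (1 + 2 * Kn)) := by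
          refine vst_diff fun k hk => ?_
          have b2 := vcv_close P (Tarr n) (cone ρ hρ) hρ.1.2.1 hf hB
            (hρhat _ hj) hΛ hδ.le (hΛL _ hj) M j k hj1 (fun q hq1 hq2 =>
              hclose j q (by omega) (by omega) (by omega) (by omega))
          have b3 := hM k hk
          rw [← hθ] at b2
          have b4 : 0 ≤ B * B * θ ^ M := by positivity
          linarith
        rw [mul_div_cancel₀ _ (by positivity)] at x2
        rw [vst_vgV]
        rw [abs_le] at *
        constructor <;> linarith [x1.1, x1.2, x2.1, x2.2])
    rw [Finset.sum_sub_distrib] at exc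
    have hinv : 0 < (n:ℝ)⁻¹ := by positivity
    have exc2 := mul_le_mul_of_nonneg_left exc hinv.le
    rw [← abs_of_pos hinv, ← abs_mul, abs_of_pos hinv, mul_sub] at exc2
    have tot : |(∫ x : Circle1, (xiD Tarr f ρ n x (t + h) - xiD Tarr f ρ n x t) ^ 2 * ρ x) -
            ∫ s in t..(t + h), σ2 s| ≤ (n:ℝ)⁻¹ * (2 * A * m * θ ^ Kn + C2) +
            (n:ℝ)⁻¹ * (m * (2 * e1) + 2 * (C + 2 * A) * (M + Kn)) + (n:ℝ)⁻¹ * (m * e1 + 2 * (C + 2 * A)) := by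
      rw [abs_le] at *
      constructor <;> linarith [k.1, k.2, exc2.1, exc2.2, rie.1, rie.2]
    refine tot.trans ?_
    have hm0 : (0:ℝ) ≤ m := Nat.cast_nonneg m
    have s1 : 2 * A * m * θ ^ Kn ≤ m * e1 := by
      have := mul_le_mul_of_nonneg_left hKn hm0
      linarith
    have s2 : (2 * A * m * θ ^ Kn + C2) + (m * (2 * e1) + 2 * (C + 2 * A) * (M + Kn)) +
        (m * e1 + 2 * (C + 2 * A)) ≤ n * h * ε + C3 := by
      rw [hC3]
      have : (m:ℝ) * ε ≤ (n * (t + h - t) + 1) * ε := mul_le_mul_of_nonneg_right hmh hε.le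
      have e4 : ε = 4 * e1 := by rw [he1]; ring
      have e5 : (m:ℝ) * ε = 4 * (m * e1) := by rw [e4]; ring
      have e6 : (n * (t + h - t) + 1) * ε = n * h * ε + ε := by ring
      linarith
    have s3 := mul_le_mul_of_nonneg_left s2 hinv.le
    have sq0 : 0 < Real.sqrt n := Real.sqrt_pos.2 hn0
    have s4 : (n:ℝ)⁻¹ * C3 ≤ ε * (Real.sqrt n)⁻¹ := by
      rw [div_le_iff₀ hε] at hsq
      have : (n:ℝ)⁻¹ = (Real.sqrt n)⁻¹ * (Real.sqrt n)⁻¹ := by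
        rw [← mul_inv, Real.mul_self_sqrt hn0.le]
      rw [this]
      have q := mul_le_mul_of_nonneg_left hsq (a := (Real.sqrt n)⁻¹ * (Real.sqrt n)⁻¹) (by positivity)
      refine q.trans (le_of_eq ?_)
      field_simp
    have s5 : (n:ℝ)⁻¹ * (n * h * ε + C3) = h * ε + (n:ℝ)⁻¹ * C3 := by
      field_simp
    linarith
  · intro ε hε
    obtain ⟨r, hr, hrc⟩ := sigc hε
    refine ⟨r, hr, fun t h ht hh hhr hth => ?_⟩
    have htm : t ∈ Icc (0:ℝ) 1 := ⟨ht, by linarith⟩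
    have hthm : t + h ∈ Icc (0:ℝ) 1 := ⟨by linarith, hth⟩
    have hI : IntervalIntegrable σ2 volume t (t + h) :=
      (sigC.mono (uIcc_subset_Icc htm hthm)).intervalIntegrable
    have e2 : (∫ s in t..(t + h), σ2 s) - h * σ2 t = ∫ s in t..(t + h), (σ2 s - σ2 t) := by
      rw [intervalIntegral.integral_sub hI intervalIntegrable_const]
      rw [intervalIntegral.integral_const, add_sub_cancel_left, smul_eq_mul]
    rw [e2, ← Real.norm_eq_abs]
    have := intervalIntegral.norm_integral_le_of_norm_le_const (a := t) (b := t + h) (C := ε)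
      (f := fun s => σ2 s - σ2 t) (fun s hs => by
        rw [uIoc_of_le (by linarith)] at hs
        rw [Real.norm_eq_abs]
        refine hrc s ⟨by linarith [hs.1], by linarith [hs.2]⟩ t htm ?_
        rw [abs_of_nonneg (by linarith [hs.1])]
        linarith [hs.2])
    rwa [add_sub_cancel_left, abs_of_pos hh] at this
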